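/- arXiv:2109.01623 — 2 statements merged into one kernel-verified Lean document; each statement's English description precedes it below -/
import Mathlib

section
/- Suppose a feasible point x̄ of the MPCC is A_α-stationary for every α ∈ {0,1}^p, and for each i ∈ {1,…,p} let C_i ⊆ (−∞,0]×(−∞,0] be a closed, connected and unbounded set with 0 ∈ C_i. Then there exist multipliers (λ, η, μ, ν) satisfying the weak stationarity system at x̄ such that for every i ∈ I^{00}(x̄), either (μ_i ≥ 0 and ν_i ≥ 0) or (μ_i, ν_i) ∈ C_i. -/
/-!
Write `Q` for the nonnegative quadrant of `ℝ²`. Fix multipliers `x^α` for each of the `2^p` choices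
of `α`, and interpolate them multilinearly over the cube `[0,1]^p`. The weak stationarity system is
convex (`convex_mpccWeakMult`), so every interpolated point satisfies it; on the face `t_i = 0` one
has `μ_i ≥ 0`, and on the face `t_i = 1` one has `ν_i ≥ 0`. It remains to find `t` with
`(μ_i(t), ν_i(t)) ∈ Q ∪ C_i` for all `i` simultaneously (`exists_crossing`).

Since `C_i` is connected and unbounded, for every `ε > 0` there is a curve `c_i` in the nonpositive
quadrant that stays within `ε` of `C_i` and runs from the origin to a point far away
(`exists_curve_near`). Let `F` be the
continuous map of the plane that sends `Q` to the origin, fixes the nonpositive quadrant and preserves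
the two mixed quadrants (`fold`). The equations `F(μ_i(t), ν_i(t)) = c_i(s_i)` in the `2p` unknowns
`(t, s)` can be recombined into the vanishing of a cross product and the equality of the
coordinate sums, whose residuals have weakly opposite signs on opposite faces of `[0,1]^(2p)`; hence the Poincaré–Miranda theorem gives a
solution (`exists_approx_crossing`), and compactness of the cube lets `ε → 0`.

Poincaré–Miranda follows from Brouwer's theorem, and this one, by smooth approximation, from the
nonexistence of a `C¹` retraction `r` of the unit ball onto the sphere (`no_retraction`). For the
latter, `∫ det D((1 - t) id + t r)` over the ball is a polynomial in `t`. It equals the volume of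
the ball for small `t > 0`, when `(1 - t) id + t r` is a bijection of the ball, but vanishes at
`t = 1`, because `r` takes values in the sphere.
-/

open Set Filter RealInnerProductSpace

noncomputable section

abbrev Rn (n : ℕ) := EuclideanSpace ℝ (Fin n)

/-- The tangent cone (Bouligand) to a set `F` at a point `x`. -/
def tangentCone' {n : ℕ} (F : Set (Rn n)) (x : Rn n) : Set (Rn n) :=
  {d | ∃ (xk : ℕ → Rn n) (tk : ℕ → ℝ),
    (∀ k, xk k ∈ F) ∧ (∀ k, 0 < tk k) ∧
    Tendsto xk atTop (nhds x) ∧ Tendsto tk atTop (nhds 0) ∧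
    Tendsto (fun k => (tk k)⁻¹ • (xk k - x)) atTop (nhds d)}

/-- The polar cone of a set. -/
def polarCone {n : ℕ} (C : Set (Rn n)) : Set (Rn n) :=
  {d | ∀ y ∈ C, ⟪d, y⟫ ≤ 0}

/-- α ∈ {0,1}^p -/
def IsBinaryVec {p : ℕ} (α : Fin p → ℝ) : Prop := ∀ i, α i = 0 ∨ α i = 1

/-- d ∈ [0,1]^p -/
def IsUnitIntervalVec {p : ℕ} (d : Fin p → ℝ) : Prop := ∀ i, d i ∈ Set.Icc (0:ℝ) 1

variable {n l m p : ℕ}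

/-- The feasible set of the MPCC. -/
def MpccFeasible (g : Fin l → Rn n → ℝ) (h : Fin m → Rn n → ℝ)
    (G H : Fin p → Rn n → ℝ) : Set (Rn n) :=
  {x | (∀ i, g i x ≤ 0) ∧ (∀ i, h i x = 0) ∧ (∀ i, 0 ≤ G i x) ∧ (∀ i, 0 ≤ H i x) ∧
    ∑ i, G i x * H i x = 0}

/-- The MPCC-linearized tangent cone at xb. -/
def MpccLinCone (g : Fin l → Rn n → ℝ) (h : Fin m → Rn n → ℝ)
    (G H : Fin p → Rn n → ℝ) (xb : Rn n) : Set (Rn n) :=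
  {d | (∀ i, g i xb = 0 → ⟪gradient (g i) xb, d⟫ ≤ 0) ∧
    (∀ i, ⟪gradient (h i) xb, d⟫ = 0) ∧
    (∀ i, G i xb = 0 → 0 < H i xb → ⟪gradient (G i) xb, d⟫ = 0) ∧
    (∀ i, 0 < G i xb → H i xb = 0 → ⟪gradient (H i) xb, d⟫ = 0) ∧
    (∀ i, G i xb = 0 → H i xb = 0 →
      0 ≤ ⟪gradient (G i) xb, d⟫ ∧ 0 ≤ ⟪gradient (H i) xb, d⟫ ∧
      ⟪gradient (G i) xb, d⟫ * ⟪gradient (H i) xb, d⟫ = 0)}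

/-- The weak stationarity system of the MPCC for given multipliers. -/
def MpccWeakMult (f : Rn n → ℝ) (g : Fin l → Rn n → ℝ) (h : Fin m → Rn n → ℝ)
    (G H : Fin p → Rn n → ℝ) (xb : Rn n)
    (lam : Fin l → ℝ) (eta : Fin m → ℝ) (mu nu : Fin p → ℝ) : Prop :=
  gradient f xb + ∑ i, lam i • gradient (g i) xb + ∑ i, eta i • gradient (h i) xb
    - ∑ i, mu i • gradient (G i) xb - ∑ i, nu i • gradient (H i) xb = 0 ∧
  (∀ i, g i xb = 0 → 0 ≤ lam i) ∧ (∀ i, g i xb ≠ 0 → lam i = 0) ∧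
  (∀ i, 0 < G i xb → H i xb = 0 → mu i = 0) ∧
  (∀ i, G i xb = 0 → 0 < H i xb → nu i = 0)

/-- A_α-stationarity for the MPCC. -/
def MpccAStat (f : Rn n → ℝ) (g : Fin l → Rn n → ℝ) (h : Fin m → Rn n → ℝ)
    (G H : Fin p → Rn n → ℝ) (xb : Rn n) (α : Fin p → ℝ) : Prop :=
  ∃ lam eta mu nu, MpccWeakMult f g h G H xb lam eta mu nu ∧
    (∀ i, G i xb = 0 → H i xb = 0 → α i = 0 → 0 ≤ mu i) ∧
    (∀ i, G i xb = 0 → H i xb = 0 → α i = 1 → 0 ≤ nu i)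

/-- P_α-stationarity for the MPCC. -/
def MpccPStat (f : Rn n → ℝ) (g : Fin l → Rn n → ℝ) (h : Fin m → Rn n → ℝ)
    (G H : Fin p → Rn n → ℝ) (xb : Rn n) (α : Fin p → ℝ) : Prop :=
  ∃ lam eta mu nu, MpccWeakMult f g h G H xb lam eta mu nu ∧
    (∀ i, G i xb = 0 → H i xb = 0 → α i = 0 → (0 ≤ mu i ∧ 0 ≤ nu i) ∨ mu i = 0) ∧
    (∀ i, G i xb = 0 → H i xb = 0 → α i = 1 → (0 ≤ mu i ∧ 0 ≤ nu i) ∨ nu i = 0)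

/-- C_d-stationarity for the MPCC. -/
def MpccCStat (f : Rn n → ℝ) (g : Fin l → Rn n → ℝ) (h : Fin m → Rn n → ℝ)
    (G H : Fin p → Rn n → ℝ) (xb : Rn n) (d : Fin p → ℝ) : Prop :=
  ∃ lam eta mu nu, MpccWeakMult f g h G H xb lam eta mu nu ∧
    (∀ i, G i xb = 0 → H i xb = 0 →
      (0 ≤ mu i ∧ 0 ≤ nu i) ∨ (1 - d i) * mu i = d i * nu i)

/-- M-stationarity for the MPCC. -/
def MpccMStat (f : Rn n → ℝ) (g : Fin l → Rn n → ℝ) (h : Fin m → Rn n → ℝ)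
    (G H : Fin p → Rn n → ℝ) (xb : Rn n) : Prop :=
  ∃ lam eta mu nu, MpccWeakMult f g h G H xb lam eta mu nu ∧
    (∀ i, G i xb = 0 → H i xb = 0 → (0 ≤ mu i ∧ 0 ≤ nu i) ∨ mu i * nu i = 0)

/-- The standard linearization cone of the branch problem NLP(α) at xb. -/
def MpccNlpLinCone (g : Fin l → Rn n → ℝ) (h : Fin m → Rn n → ℝ)
    (G H : Fin p → Rn n → ℝ) (xb : Rn n) (α : Fin p → ℝ) : Set (Rn n) :=
  {d | (∀ i, g i xb = 0 → ⟪gradient (g i) xb, d⟫ ≤ 0) ∧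
    (∀ i, ⟪gradient (h i) xb, d⟫ = 0) ∧
    (∀ i, 0 < G i xb → H i xb = 0 → ⟪gradient (H i) xb, d⟫ = 0) ∧
    (∀ i, G i xb = 0 → H i xb = 0 → α i = 0 →
      ⟪gradient (H i) xb, d⟫ = 0 ∧ 0 ≤ ⟪gradient (G i) xb, d⟫) ∧
    (∀ i, G i xb = 0 → 0 < H i xb → ⟪gradient (G i) xb, d⟫ = 0) ∧
    (∀ i, G i xb = 0 → H i xb = 0 → α i = 1 →
      ⟪gradient (G i) xb, d⟫ = 0 ∧ 0 ≤ ⟪gradient (H i) xb, d⟫)}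

/-! ### The smooth no-retraction theorem -/

/-- Lagrange extrapolation: the value at `1` of a polynomial of degree at most `N` is a fixed linear
combination of its values at nodes in `(0, δ]`. -/
theorem exists_extrapolation (N : ℕ) {δ : ℝ} (hδ : 0 < δ) :
    ∃ t w : ℕ → ℝ, (∀ j, 0 < t j ∧ t j ≤ δ) ∧ ∀ q : Polynomial ℝ, q.natDegree ≤ N →
      q.eval 1 = ∑ j ∈ Finset.range (N + 1), w j * q.eval (t j) := by
  set t : ℕ → ℝ := fun j => δ / (j + 1) with ht
  refine ⟨t, fun j => (Lagrange.basis (Finset.range (N + 1)) t j).eval 1, fun j => ⟨?_, ?_⟩, ?_⟩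
  · simp only [ht]; positivity
  · simp only [ht]; exact div_le_self hδ.le (by linarith [(Nat.cast_nonneg j : (0:ℝ) ≤ j)])
  · intro q hq
    have hinj : Set.InjOn t (Finset.range (N + 1)) := by
      intro a _ b _ hab
      simp only [ht] at hab
      have h1 : (a : ℝ) + 1 ≠ 0 := by positivity
      have h2 : (b : ℝ) + 1 ≠ 0 := by positivity
      rw [div_eq_div_iff h1 h2] at hab
      have := mul_left_cancel₀ hδ.ne' hab
      exact_mod_cast (by linarith : (a : ℝ) = b)
    have hdeg : q.degree < (Finset.range (N + 1)).card := by
      rw [Finset.card_range]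
      exact lt_of_le_of_lt Polynomial.degree_le_natDegree (by exact_mod_cast Nat.lt_succ_of_le hq)
    conv_lhs => rw [Lagrange.eq_interpolate hinj hdeg]
    rw [Lagrange.interpolate_apply, Polynomial.eval_finsetSum]
    refine Finset.sum_congr rfl fun j _ => ?_
    simp [mul_comm]

/-- `t ↦ det (1 + t D)` is a polynomial of degree at most `N`. -/
theorem exists_det_poly {N : ℕ} (D : Rn N →L[ℝ] Rn N) :
    ∃ q : Polynomial ℝ, q.natDegree ≤ N ∧ ∀ t : ℝ,
      q.eval t = (ContinuousLinearMap.id ℝ (Rn N) + t • D).det := by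
  let b := (EuclideanSpace.basisFun (Fin N) ℝ).toBasis
  let M := LinearMap.toMatrix b b (D : _ →ₗ[ℝ] _)
  refine ⟨((Polynomial.X : Polynomial ℝ) • M.map Polynomial.C
    + (1 : Matrix (Fin N) (Fin N) ℝ).map Polynomial.C).det, ?_, fun t => ?_⟩
  · simpa using Polynomial.natDegree_det_X_add_C_le M 1
  · rw [ContinuousLinearMap.det, ← LinearMap.det_toMatrix b, ← Polynomial.coe_evalRingHom,
      RingHom.map_det]
    congr 1
    ext i j
    by_cases hij : i = j <;>
    simp [M, LinearMap.toMatrix_apply, b, hij] <;> ring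

theorem injective_of_contraction {N : ℕ}
    {D : Rn N →L[ℝ] Rn N} {t : ℝ}
    (ht : 0 ≤ t) (hD : t * ‖D‖ ≤ 1 / 2) :
    Function.Injective (ContinuousLinearMap.id ℝ (Rn N) + t • D) := by
  rw [injective_iff_map_eq_zero]
  intro v hv
  have h1 : v = -(t • D v) := by
    have : v + t • D v = 0 := by simpa using hv
    exact eq_neg_of_add_eq_zero_left this
  have h2 : ‖v‖ ≤ t * (‖D‖ * ‖v‖) := by
    calc ‖v‖ = ‖-(t • D v)‖ := by rw [← h1]
      _ = t * ‖D v‖ := by rw [norm_neg, norm_smul, Real.norm_of_nonneg ht]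
      _ ≤ _ := by gcongr; exact D.le_opNorm v
  have h3 : 0 ≤ ‖v‖ := norm_nonneg v
  rw [← norm_eq_zero]
  nlinarith

/-- The determinant of `1 + s D` does not vanish for `0 ≤ s ≤ t` and equals `1` at `s = 0`. -/
theorem det_pos_of_contraction {N : ℕ}
    {D : Rn N →L[ℝ] Rn N} {t : ℝ}
    (ht : 0 ≤ t) (hD : t * ‖D‖ ≤ 1 / 2) :
    0 < (ContinuousLinearMap.id ℝ (Rn N) + t • D).det := by
  have hne : ∀ s ∈ Icc 0 t, (ContinuousLinearMap.id ℝ (Rn N) + s • D).det ≠ 0 := by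
    intro s hs h0
    have hinj : Function.Injective (ContinuousLinearMap.id ℝ (Rn N) + s • D) :=
      injective_of_contraction hs.1
        (le_trans (mul_le_mul_of_nonneg_right hs.2 (norm_nonneg D)) hD)
    exact (LinearMap.bot_lt_ker_of_det_eq_zero h0).ne' (LinearMap.ker_eq_bot.2 hinj)
  by_contra hneg
  have hc : ContinuousOn (fun s : ℝ => (ContinuousLinearMap.id ℝ (Rn N) + s • D).det) (Icc 0 t) := by
    apply Continuous.continuousOn
    exact ContinuousLinearMap.continuous_det.comp (by fun_prop)
  have := intermediate_value_Icc' ht hc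
  obtain ⟨s, hs, hs0⟩ := this (show (0:ℝ) ∈ _ from ⟨not_lt.1 hneg, by
    simp [ContinuousLinearMap.det]⟩)
  exact hne s hs hs0

/-- There is no `C¹` retraction of the closed unit ball onto the unit sphere. -/
theorem no_retraction {N : ℕ} (r : Rn N → Rn N)
    (hr : ∀ x, ‖x‖ ≤ 1 → ContDiffAt ℝ 1 r x) (hr1 : ∀ x, ‖x‖ ≤ 1 → ‖r x‖ = 1)
    (hrid : ∀ x, ‖x‖ = 1 → r x = x) : False := by
  set h : (Rn N) → (Rn N) := fun x => r x - x with hh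
  set D : (Rn N) → (Rn N) →L[ℝ] (Rn N) := fun x => fderiv ℝ h x with hD
  set B : Set (Rn N) := Metric.closedBall 0 1 with hB
  set U : Set (Rn N) := Metric.ball 0 1 with hU
  have hUB : U ⊆ B := Metric.ball_subset_closedBall
  have hhC : ∀ x ∈ B, ContDiffAt ℝ 1 h x := fun x hx =>
    (hr x (by simpa [hB] using hx)).sub contDiffAt_id
  have hDcont : ContinuousOn D B := fun x hx =>
    (((hhC x hx).fderiv_right (m := 0) (by simp)).continuousAt).continuousWithinAt
  have hBc : IsCompact B := isCompact_closedBall 0 1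
  obtain ⟨K, hK⟩ := hBc.exists_bound_of_continuousOn hDcont
  have hK0 : 0 ≤ K := le_trans (norm_nonneg _) (hK 0 (by simp [hB]))
  have hlip : ∀ x ∈ B, ∀ y ∈ B, ‖h y - h x‖ ≤ K * ‖y - x‖ := fun x hx y hy =>
    Convex.norm_image_sub_le_of_norm_fderiv_le
      (fun z hz => (hhC z hz).differentiableAt (by simp)) hK (convex_closedBall 0 1) hx hy
  set δ : ℝ := 1 / (2 * (K + 1)) with hδ
  have hδ0 : 0 < δ := by positivity
  have hδK : δ * K ≤ 1 / 2 := by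
    rw [hδ, div_mul_eq_mul_div, div_le_div_iff₀ (by positivity) (by positivity)]; linarith
  have hδ1 : δ < 1 := by
    rw [hδ, div_lt_one (by positivity)]; linarith
  have hcontr : ∀ t, 0 < t → t ≤ δ → ∀ x ∈ B, t * ‖D x‖ ≤ 1 / 2 := fun t ht htδ x hx =>
    le_trans (mul_le_mul htδ (hK x hx) (norm_nonneg _) hδ0.le) hδK
  have hderiv : ∀ t : ℝ, ∀ x ∈ B, HasStrictFDerivAt (fun y => y + t • h y)
      (ContinuousLinearMap.id ℝ (Rn N) + t • D x) x := fun t x hx =>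
    (hasStrictFDerivAt_id x).add
      (((hhC x hx).hasStrictFDerivAt (by simp)).const_smul t)
  -- For `0 < t ≤ δ` the map `id + t h` is a bijection of the open ball onto itself.
  have hinj : ∀ t, 0 < t → t ≤ δ → InjOn (fun y => y + t • h y) U := by
    intro t ht htδ x hx y hy hxy
    have h1 : y - x = - (t • (h y - h x)) := by
      simp only at hxy
      rw [smul_sub]
      rw [← sub_eq_zero] at hxy
      rw [← sub_eq_zero, ← neg_eq_zero, ← hxy]; abel
    have h2 : ‖y - x‖ ≤ t * (K * ‖y - x‖) := by
      calc ‖y - x‖ = ‖- (t • (h y - h x))‖ := by rw [← h1]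
        _ = t * ‖h y - h x‖ := by rw [norm_neg, norm_smul, Real.norm_of_nonneg ht.le]
        _ ≤ _ := by gcongr; exact hlip x (hUB hx) y (hUB hy)
    have h3 := norm_nonneg (y - x)
    have h4 : t * K ≤ 1 / 2 := le_trans (mul_le_mul_of_nonneg_right htδ hK0) hδK
    have : ‖y - x‖ = 0 := by nlinarith
    exact (sub_eq_zero.1 (norm_eq_zero.1 this)).symm
  have himage : ∀ t, 0 < t → t ≤ δ → (fun y => y + t • h y) '' U = U := by
    intro t ht htδ
    have hform : ∀ x : (Rn N), x + t • h x = (1 - t) • x + t • r x := by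
      intro x; simp only [hh]; module
    apply Subset.antisymm
    · rintro _ ⟨x, hx, rfl⟩
      have hx1 : ‖x‖ < 1 := by simpa [hU] using hx
      have : ‖x + t • h x‖ < 1 := by
        rw [hform]
        calc _ ≤ ‖(1 - t) • x‖ + ‖t • r x‖ := norm_add_le _ _
          _ = (1 - t) * ‖x‖ + t * 1 := by
            rw [norm_smul, norm_smul, hr1 x hx1.le, Real.norm_of_nonneg ht.le,
              Real.norm_of_nonneg (by linarith)]
          _ < 1 := by nlinarith
      simpa [hU] using this
    · have hopen : IsOpen ((fun y => y + t • h y) '' U) := by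
        rw [isOpen_iff_mem_nhds]
        rintro _ ⟨x, hx, rfl⟩
        have hsurj : (((ContinuousLinearMap.id ℝ (Rn N) + t • D x : (Rn N) →L[ℝ] (Rn N))) : (Rn N) →ₗ[ℝ] (Rn N)).range = ⊤ :=
          LinearMap.range_eq_top.2 (LinearMap.injective_iff_surjective.1
            (injective_of_contraction ht.le (hcontr t ht htδ x (hUB hx))))
        have := (hderiv t x (hUB hx)).map_nhds_eq_of_surj hsurj
        rw [← this]
        exact image_mem_map (Metric.isOpen_ball.mem_nhds hx)
      -- The image is open, and relatively closed in the ball since the sphere is fixed pointwise.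
      refine IsPreconnected.subset_of_closure_inter_subset
        (convex_ball (0:(Rn N)) 1).isPreconnected hopen ?_ ?_
      · refine ⟨0 + t • h 0, ?_, mem_image_of_mem (fun y => y + t • h y)
          (Metric.mem_ball_self one_pos)⟩
        rw [mem_ball_zero_iff, hform, smul_zero, zero_add, norm_smul, hr1 0 (by simp), Real.norm_of_nonneg ht.le]
        linarith
      · rintro y ⟨hy, hyU⟩
        have hcl : IsClosed ((fun y => y + t • h y) '' B) :=
          (hBc.image_of_continuousOn fun x hx =>
            (hderiv t x hx).hasFDerivAt.continuousAt.continuousWithinAt).isClosed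
        obtain ⟨x, hx, rfl⟩ := closure_minimal (image_mono hUB) hcl hy
        refine ⟨x, ?_, rfl⟩
        have hx1 : ‖x‖ ≤ 1 := by simpa [hB] using hx
        rcases hx1.lt_or_eq with hlt | heq
        · simpa [hU] using hlt
        · exfalso
          have : x + t • h x = x := by simp [hh, hrid x heq]
          simp only [this] at hyU
          simp [hU, heq] at hyU
  have hint : ∀ t : ℝ, MeasureTheory.IntegrableOn
      (fun x => (ContinuousLinearMap.id ℝ (Rn N) + t • D x).det) U := fun t =>
    (ContinuousOn.integrableOn_compact hBc
      (ContinuousLinearMap.continuous_det.comp_continuousOn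
        (continuousOn_const.add (hDcont.const_smul t)))).mono_set hUB
  have hvol : ∀ t, 0 < t → t ≤ δ →
      ∫ x in U, (ContinuousLinearMap.id ℝ (Rn N) + t • D x).det = MeasureTheory.volume.real U := by
    intro t ht htδ
    have hmeas : MeasurableSet U := Metric.isOpen_ball.measurableSet
    have := MeasureTheory.integral_image_eq_integral_abs_det_fderiv_smul MeasureTheory.volume
      hmeas (fun x hx => (hderiv t x (hUB hx)).hasFDerivAt.hasFDerivWithinAt)
      (hinj t ht htδ) (fun _ => (1:ℝ))
    rw [himage t ht htδ] at this
    simp only [MeasureTheory.integral_const, smul_eq_mul, mul_one,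
      MeasureTheory.measureReal_restrict_apply_univ] at this
    rw [this]
    refine MeasureTheory.setIntegral_congr_fun hmeas fun x hx => ?_
    exact (abs_of_pos (det_pos_of_contraction ht.le (hcontr t ht htδ x (hUB hx)))).symm
  have hdet1 : ∀ x ∈ U, (ContinuousLinearMap.id ℝ (Rn N) + (1:ℝ) • D x).det = 0 := by
    intro x hx
    by_contra hne
    have hx1 : ‖x‖ < 1 := by simpa [hU] using hx
    have hL : HasFDerivAt r (ContinuousLinearMap.id ℝ (Rn N) + (1:ℝ) • D x) x := by
      have := (hderiv 1 x (hUB hx)).hasFDerivAt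
      refine this.congr_of_eventuallyEq (Eventually.of_forall fun y => ?_)
      simp [hh]
    set L := ContinuousLinearMap.id ℝ (Rn N) + (1:ℝ) • D x
    have hsurj : Function.Surjective L := by
      have hLinj : Function.Injective (L : Rn N →ₗ[ℝ] Rn N) := by
        rw [← LinearMap.ker_eq_bot]
        by_contra hk
        exact hne (LinearMap.det_eq_zero_iff_ker_ne_bot.2 hk)
      exact LinearMap.injective_iff_surjective.1 hLinj
    -- Differentiating `‖r‖ ^ 2 = 1` shows that `r x` is orthogonal to the range of `L`.
    obtain ⟨v, hv⟩ := hsurj (r x)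
    have hn := hL.norm_sq
    have hconst : (fun y => ‖r y‖ ^ 2) =ᶠ[nhds x] fun _ => (1:ℝ) := by
      filter_upwards [Metric.isOpen_ball.mem_nhds hx] with y hy
      rw [hr1 y (by have : ‖y‖ < 1 := by simpa [hU] using hy
                    exact this.le)]
      norm_num
    have h0 := (hn.congr_of_eventuallyEq hconst.symm).unique (hasFDerivAt_const (1:ℝ) x)
    have := congrArg (fun A => A v) h0
    have h1 := hr1 x hx1.le
    simp [hv] at this
    simp [this] at h1
  obtain ⟨t, w, ht, hw⟩ := exists_extrapolation N hδ0
  have hpt : ∀ x, (ContinuousLinearMap.id ℝ (Rn N) + (1:ℝ) • D x).det =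
      ∑ j ∈ Finset.range (N + 1), w j * (ContinuousLinearMap.id ℝ (Rn N) + t j • D x).det := by
    intro x
    obtain ⟨q, hq, hqe⟩ := exists_det_poly (D x)
    have := hw q hq
    simpa only [hqe] using this
  have hw1 : ∑ j ∈ Finset.range (N + 1), w j = 1 := by
    have := hw 1 (by simp)
    simpa using this.symm
  have hI : ∫ x in U, (ContinuousLinearMap.id ℝ (Rn N) + (1:ℝ) • D x).det
      = MeasureTheory.volume.real U := by
    simp_rw [hpt]
    rw [MeasureTheory.integral_finsetSum _ fun j _ => (hint (t j)).const_mul (w j)]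
    simp_rw [MeasureTheory.integral_const_mul]
    rw [Finset.sum_congr rfl fun j _ => by rw [hvol (t j) (ht j).1 (ht j).2], ← Finset.sum_mul,
      hw1, one_mul]
  rw [MeasureTheory.setIntegral_congr_fun (g := fun _ => (0:ℝ))
    Metric.isOpen_ball.measurableSet hdet1] at hI
  have hpos : 0 < MeasureTheory.volume.real U := by
    refine ENNReal.toReal_pos (Metric.measure_ball_pos _ _ one_pos).ne' ?_
    exact MeasureTheory.measure_ball_lt_top.ne
  simp at hI
  linarith

/-! ### Brouwer and Poincaré–Miranda -/

/-- Brouwer's theorem for `C¹` maps of the closed ball into the open ball. Without a fixed point, the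
ray from `q x` through `x` meets the sphere in a point depending smoothly on `x`, which would give a
retraction. -/
theorem brouwer_contDiff {N : ℕ} (q : Rn N → Rn N) (hq : ContDiff ℝ 1 q)
    (hq1 : ∀ x, ‖x‖ ≤ 1 → ‖q x‖ < 1) : ∃ x, ‖x‖ ≤ 1 ∧ q x = x := by
  by_contra! hne
  set u : Rn N → Rn N := fun x => x - q x with hu
  set s : Rn N → ℝ := fun x => ⟪x, u x⟫ with hs
  set d : Rn N → ℝ := fun x => s x ^ 2 + ‖u x‖ ^ 2 * (1 - ‖x‖ ^ 2) with hd
  have huC : ContDiff ℝ 1 u := contDiff_id.sub hq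
  have hsC : ContDiff ℝ 1 s := contDiff_id.inner ℝ huC
  have hnC : ContDiff ℝ 1 (fun x => ‖u x‖ ^ 2) := huC.norm_sq ℝ
  have hdC : ContDiff ℝ 1 d :=
    (hsC.pow 2).add (hnC.mul (contDiff_const.sub (contDiff_id.norm_sq ℝ)))
  have hupos : ∀ x, ‖x‖ ≤ 1 → 0 < ‖u x‖ ^ 2 := by
    intro x hx
    have : u x ≠ 0 := fun h0 => hne x hx (sub_eq_zero.1 h0).symm
    positivity
  have hspos : ∀ x, ‖x‖ = 1 → 0 < s x := by
    intro x hx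
    have h1 : s x = 1 - ⟪x, q x⟫ := by
      simp only [hs, hu, inner_sub_right, real_inner_self_eq_norm_sq, hx]; norm_num
    have h2 := real_inner_le_norm x (q x)
    rw [hx, one_mul] at h2
    linarith [hq1 x hx.le]
  have hdpos : ∀ x, ‖x‖ ≤ 1 → 0 < d x := by
    intro x hx
    rcases hx.lt_or_eq with hlt | heq
    · have h1 : 0 < 1 - ‖x‖ ^ 2 := by nlinarith [norm_nonneg x]
      have := mul_pos (hupos x hx) h1
      simp only [hd]; positivity
    · have := hspos x heq
      simp only [hd, heq]; norm_num; positivity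
  set τ : Rn N → ℝ := fun x => (-s x + √(d x)) / ‖u x‖ ^ 2 with hτ
  refine no_retraction (fun x => x + τ x • u x) ?_ ?_ ?_
  · intro x hx
    have hτC : ContDiffAt ℝ 1 τ x :=
      (hsC.contDiffAt.neg.add (hdC.contDiffAt.sqrt (hdpos x hx).ne')).div hnC.contDiffAt
        (hupos x hx).ne'
    exact contDiffAt_id.add (hτC.smul huC.contDiffAt)
  · intro x hx
    have h1 : ‖x + τ x • u x‖ ^ 2 = ‖x‖ ^ 2 + 2 * (τ x * s x) + τ x ^ 2 * ‖u x‖ ^ 2 := by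
      rw [norm_add_sq_real, real_inner_smul_right, norm_smul, mul_pow, Real.norm_eq_abs, sq_abs]
    have h2 : τ x * ‖u x‖ ^ 2 = -s x + √(d x) := div_mul_cancel₀ _ (hupos x hx).ne'
    have h3 : √(d x) ^ 2 = d x := Real.sq_sqrt (hdpos x hx).le
    have h4 : ‖u x‖ ^ 2 * ‖x + τ x • u x‖ ^ 2 = ‖u x‖ ^ 2 * 1 := by
      rw [h1]
      calc _ = ‖u x‖ ^ 2 * ‖x‖ ^ 2 + 2 * (τ x * ‖u x‖ ^ 2) * s x + (τ x * ‖u x‖ ^ 2) ^ 2 := by ring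
        _ = ‖u x‖ ^ 2 * ‖x‖ ^ 2 - s x ^ 2 + √(d x) ^ 2 := by rw [h2]; ring
        _ = _ := by rw [h3]; simp only [hd]; ring
    have h5 := mul_left_cancel₀ (hupos x hx).ne' h4
    exact (pow_eq_one_iff_of_nonneg (norm_nonneg _) two_ne_zero).1 h5
  · intro x hx
    have h1 : √(d x) = s x := by
      have : d x = s x ^ 2 := by simp only [hd, hx]; ring
      rw [this, Real.sqrt_sq (hspos x hx).le]
    simp [hτ, h1]

/-- Brouwer's theorem for a bounded continuous self-map of the whole space. -/
theorem brouwer_bounded {N : ℕ} (f : Rn N → Rn N) (hf : Continuous f) {R : ℝ}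
    (hR : ∀ x, ‖f x‖ ≤ R) : ∃ x, f x = x := by
  have hR0 : 0 ≤ R := (norm_nonneg _).trans (hR 0)
  have happrox : ∀ ε > 0, ε ≤ 1 → ∃ x ∈ Metric.closedBall (0 : Rn N) (R + 1), ‖f x - x‖ < ε := by
    intro ε hε hε1
    obtain ⟨g, hgC, hg, -⟩ := hf.exists_contDiff_approx 1 (ε := fun _ => ε) continuous_const
      (fun _ => hε)
    have hR1 : 0 < R + 1 := by linarith
    obtain ⟨y, hy, hfix⟩ := brouwer_contDiff (fun y => (R + 1)⁻¹ • g ((R + 1) • y))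
      (by
        have : ContDiff ℝ 1 g := hgC
        fun_prop)
      (by
        intro y _
        rw [norm_smul, Real.norm_of_nonneg (by positivity), inv_mul_lt_iff₀ hR1, mul_one]
        have h1 := hg ((R + 1) • y)
        rw [dist_eq_norm] at h1
        have h2 := norm_le_norm_add_norm_sub' (g ((R + 1) • y)) (f ((R + 1) • y))
        linarith [hR ((R + 1) • y)])
    refine ⟨(R + 1) • y, ?_, ?_⟩
    · rw [mem_closedBall_zero_iff, norm_smul, Real.norm_of_nonneg hR1.le]
      nlinarith
    · have h1 := hg ((R + 1) • y)
      rw [inv_smul_eq_iff₀ hR1.ne'] at hfix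
      rwa [hfix, dist_comm, dist_eq_norm] at h1
  obtain ⟨x, hx, hmin⟩ := (isCompact_closedBall (0 : Rn N) (R + 1)).exists_isMinOn
    ⟨0, by simp; linarith⟩ (f := fun x => ‖f x - x‖) (by fun_prop)
  refine ⟨x, ?_⟩
  by_contra hne
  have hpos : 0 < ‖f x - x‖ := norm_pos_iff.2 (sub_ne_zero.2 hne)
  obtain ⟨y, hy, hlt⟩ := happrox (min ‖f x - x‖ 1) (by positivity) (min_le_right _ _)
  have : ‖f x - x‖ ≤ ‖f y - y‖ := hmin hy
  exact absurd (lt_of_lt_of_le hlt (min_le_left _ _)) (not_lt.2 this)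

/-- The Poincaré–Miranda theorem on `[0,1]^ι`. With `P` the coordinatewise projection onto the cube,
a fixed point of `y ↦ P (P y + g (P y))` is a zero of `g`. -/
theorem poincare_miranda {ι : Type*} [Fintype ι] (g : (ι → ℝ) → ι → ℝ) (hg : Continuous g)
    (h0 : ∀ x ∈ Icc (0 : ι → ℝ) 1, ∀ i, x i = 0 → 0 ≤ g x i)
    (h1 : ∀ x ∈ Icc (0 : ι → ℝ) 1, ∀ i, x i = 1 → g x i ≤ 0) :
    ∃ x ∈ Icc (0 : ι → ℝ) 1, g x = 0 := by
  let e := Fintype.equivFin ι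
  let c : ℝ → ℝ := fun a => max 0 (min 1 a)
  have hc : Continuous c := by fun_prop
  have hc0 : ∀ a, 0 ≤ c a := fun a => le_max_left _ _
  have hc1 : ∀ a, c a ≤ 1 := fun a => max_le zero_le_one (min_le_left _ _)
  let P : Rn (Fintype.card ι) → ι → ℝ := fun y i => c (y (e i))
  have hP : Continuous P := by fun_prop
  obtain ⟨y, hy⟩ := brouwer_bounded (N := Fintype.card ι)
    (fun y => WithLp.toLp 2 fun j => c (P y (e.symm j) + g (P y) (e.symm j)))
    (by fun_prop) (R := √(Fintype.card ι)) (by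
      intro y
      rw [EuclideanSpace.norm_eq]
      apply Real.sqrt_le_sqrt
      calc _ ≤ ∑ j : Fin (Fintype.card ι), (1 : ℝ) := by
            refine Finset.sum_le_sum fun j _ => ?_
            rw [Real.norm_of_nonneg (hc0 _)]
            exact pow_le_one₀ (hc0 _) (hc1 _)
        _ = _ := by simp)
  have hmem : P y ∈ Icc (0 : ι → ℝ) 1 := ⟨fun i => hc0 _, fun i => hc1 _⟩
  refine ⟨P y, hmem, ?_⟩
  have hcoord : ∀ i, c (P y i + g (P y) i) = P y i := by
    intro i
    have h2 : ∀ j, y j = c (P y (e.symm j) + g (P y) (e.symm j)) := fun j => by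
      conv_lhs => rw [← hy]
    have h3 := h2 (e i)
    rw [e.symm_apply_apply] at h3
    have h4 : P y i = c (y (e i)) := rfl
    have h5 : c (y (e i)) = y (e i) := by
      have a0 : 0 ≤ y (e i) := h3 ▸ hc0 _
      have a1 : y (e i) ≤ 1 := h3 ▸ hc1 _
      simp only [c]; rw [min_eq_right a1, max_eq_right a0]
    rw [← h3, h4, h5]
  funext i
  have hi := hcoord i
  have b0 := h0 _ hmem i
  have b1 := h1 _ hmem i
  have m0 : 0 ≤ P y i := hc0 _
  have m1 : P y i ≤ 1 := hc1 _
  generalize P y i = a at *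
  generalize g (P y) i = b at *
  simp only [c] at hi
  simp only [Pi.zero_apply]
  rcases lt_trichotomy b 0 with hb | hb | hb
  · exfalso
    rcases max_cases 0 (min 1 (a + b)) with h | h <;> rcases min_cases 1 (a + b) with h' | h'
    all_goals first | linarith | (have := b0 (by linarith); linarith)
  · exact hb
  · exfalso
    rcases max_cases 0 (min 1 (a + b)) with h | h <;> rcases min_cases 1 (a + b) with h' | h'
    all_goals first | linarith | (have := b1 (by linarith); linarith)

/-! ### Crossing connected unbounded sets in the nonpositive quadrant -/

/-- The `ε`-thickening of `C` is open and connected, hence path connected; clamping a path in it to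
the nonpositive quadrant does not increase distances to `C`. -/
theorem exists_curve_near {C : Set (ℝ × ℝ)} (hsub : C ⊆ Iic (0:ℝ) ×ˢ Iic (0:ℝ))
    (hconn : IsConnected C) (hunbdd : ¬ Bornology.IsBounded C) (h0 : (0 : ℝ × ℝ) ∈ C)
    {ε : ℝ} (hε : 0 < ε) (R : ℝ) :
    ∃ c : ℝ → ℝ × ℝ, Continuous c ∧ (∀ s, (c s).1 ≤ 0 ∧ (c s).2 ≤ 0) ∧ c 0 = 0 ∧
      (c 1).1 + (c 1).2 ≤ -R ∧ ∀ s, ∃ z ∈ C, dist (c s) z < ε := by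
  obtain ⟨z, hz, hzR⟩ : ∃ z ∈ C, R < ‖z‖ := by
    by_contra! hcon
    exact hunbdd (isBounded_iff_forall_norm_le.2 ⟨R, hcon⟩)
  have hopen : IsOpen (Metric.thickening ε C) := Metric.isOpen_thickening
  have hTconn : IsConnected (Metric.thickening ε C) := by
    rw [← add_ball_zero, ← Set.add_image_prod]
    refine (hconn.prod (Metric.isConnected_ball hε)).image _ ?_
    exact continuous_add.continuousOn
  have hpath : IsPathConnected (Metric.thickening ε C) := hopen.isConnected_iff_isPathConnected.1 hTconn
  obtain ⟨γ, hγ⟩ := hpath.joinedIn 0 (Metric.self_subset_thickening hε C h0) z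
    (Metric.self_subset_thickening hε C hz)
  have hγ' : ∀ s : ℝ, γ.extend s ∈ Metric.thickening ε C := fun s => by
    obtain ⟨s', hs'⟩ : γ.extend s ∈ range γ := by
      rw [← γ.extend_range]; exact mem_range_self s
    rw [← hs']; exact hγ s'
  have hz1 : z.1 ≤ 0 := (hsub hz).1
  have hz2 : z.2 ≤ 0 := (hsub hz).2
  have hclamp : ∀ a b : ℝ, b ≤ 0 → |min a 0 - b| ≤ |a - b| := by
    intro a b hb
    rcases min_cases a 0 with h | h
    · rw [h.1]
    · rw [h.1, abs_of_nonneg (by linarith), abs_of_nonneg (by linarith)]; linarith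
  refine ⟨fun s => (min (γ.extend s).1 0, min (γ.extend s).2 0), ?_, ?_, ?_, ?_, ?_⟩
  · have := γ.continuous_extend
    fun_prop
  · exact fun s => ⟨min_le_right _ _, min_le_right _ _⟩
  · simp
  · simp only [Path.extend_one, min_eq_left hz1, min_eq_left hz2]
    rw [Prod.norm_def, lt_max_iff, Real.norm_eq_abs, Real.norm_eq_abs, abs_of_nonpos hz1,
      abs_of_nonpos hz2] at hzR
    rcases hzR with h | h <;> linarith
  · intro s
    obtain ⟨y, hy, hdist⟩ := Metric.mem_thickening_iff.1 (hγ' s)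
    refine ⟨y, hy, lt_of_le_of_lt ?_ hdist⟩
    rw [Prod.dist_eq, Prod.dist_eq]
    exact max_le_max (hclamp _ _ (hsub hy).1) (hclamp _ _ (hsub hy).2)

/-- The first coordinate of the folding map `F (μ, ν) = (fold μ ν, fold ν μ)` of the plane. `F` maps
the nonnegative quadrant to the origin and is the identity on the nonpositive quadrant. The factor
`1 / 2` makes the sum of its coordinates negative off the nonnegative quadrant. -/
def fold (μ ν : ℝ) : ℝ := min μ (max (-ν) 0 / 2)

theorem continuous_fold : Continuous fun z : ℝ × ℝ => fold z.1 z.2 := by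
  unfold fold; fun_prop

theorem fold_nonneg {μ ν : ℝ} (h : 0 ≤ μ) : 0 ≤ fold μ ν := le_min h (by positivity)

theorem fold_nonpos {μ ν : ℝ} (h : 0 ≤ ν) : fold μ ν ≤ 0 := by
  refine (min_le_right _ _).trans ?_
  rw [max_eq_right (by linarith)]; simp

theorem fold_ge (μ ν : ℝ) : -|μ| ≤ fold μ ν :=
  le_min (neg_abs_le μ) (by have : 0 ≤ max (-ν) 0 / 2 := by positivity
                            linarith [abs_nonneg μ])

theorem fold_add_fold_nonpos (μ ν : ℝ) : fold μ ν + fold ν μ ≤ 0 := by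
  unfold fold
  rcases max_cases (-ν) 0 with h | h <;> rcases max_cases (-μ) 0 with h' | h' <;>
  rcases min_cases μ (max (-ν) 0 / 2) with k | k <;>
  rcases min_cases ν (max (-μ) 0 / 2) with k' | k' <;> linarith

theorem of_fold_add_fold_eq_zero {μ ν : ℝ} (h0 : fold μ ν + fold ν μ = 0) : 0 ≤ μ ∧ 0 ≤ ν := by
  unfold fold at h0
  rcases max_cases (-ν) 0 with h | h <;> rcases max_cases (-μ) 0 with h' | h' <;>
  rcases min_cases μ (max (-ν) 0 / 2) with k | k <;>
  rcases min_cases ν (max (-μ) 0 / 2) with k' | k' <;> constructor <;> linarith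

/-- If `F (μ, ν)` is parallel to the point `(a, b)` of the nonpositive quadrant and has the same
coordinate sum, then `(μ, ν)` is nonnegative or equals `(a, b)`. -/
theorem of_fold_eq {μ ν a b : ℝ} (ha : a ≤ 0) (hb : b ≤ 0) (hcross : fold ν μ * a - fold μ ν * b = 0)
    (hsum : a + b = fold μ ν + fold ν μ) : (0 ≤ μ ∧ 0 ≤ ν) ∨ (μ = a ∧ ν = b) := by
  by_cases hab : a + b = 0
  · exact Or.inl (of_fold_add_fold_eq_zero (by linarith))
  · have h1 : fold μ ν = a := by
      apply mul_right_cancel₀ hab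
      linear_combination (a : ℝ) * hsum.symm - hcross
    have h2 : fold ν μ = b := by linarith
    unfold fold at h1 h2
    by_cases hq : 0 ≤ μ ∧ 0 ≤ ν
    · exact Or.inl hq
    · refine Or.inr ?_
      have hq' : μ < 0 ∨ ν < 0 := by
        by_contra! hcon
        exact hq hcon
      rcases max_cases (-ν) 0 with h | h <;> rcases max_cases (-μ) 0 with h' | h' <;>
      rcases min_cases μ (max (-ν) 0 / 2) with k | k <;>
      rcases min_cases ν (max (-μ) 0 / 2) with k' | k' <;> rcases hq' with hq' | hq' <;>
      constructor <;> linarith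

/-- Poincaré–Miranda in the unknowns `t` (left summand) and curve parameters `s` (right summand). -/
theorem exists_approx_crossing {p : ℕ} (y : (Fin p → ℝ) → Fin p → ℝ × ℝ) (hy : Continuous y)
    (hy0 : ∀ t ∈ Icc (0 : Fin p → ℝ) 1, ∀ i, t i = 0 → 0 ≤ (y t i).1)
    (hy1 : ∀ t ∈ Icc (0 : Fin p → ℝ) 1, ∀ i, t i = 1 → 0 ≤ (y t i).2)
    (C : Fin p → Set (ℝ × ℝ)) (hCsub : ∀ i, C i ⊆ Iic (0:ℝ) ×ˢ Iic (0:ℝ))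
    (hCconn : ∀ i, IsConnected (C i)) (hCunbdd : ∀ i, ¬ Bornology.IsBounded (C i))
    (hC0 : ∀ i, (0:ℝ × ℝ) ∈ C i) {ε : ℝ} (hε : 0 < ε) :
    ∃ t ∈ Icc (0 : Fin p → ℝ) 1, ∀ i, ∃ z ∈ Ici (0:ℝ) ×ˢ Ici (0:ℝ) ∪ C i, dist (y t i) z < ε := by
  obtain ⟨R, hR⟩ := (isCompact_Icc (a := (0 : Fin p → ℝ)) (b := 1)).exists_bound_of_continuousOn
    hy.continuousOn
  choose c hc hcneg hc0 hc1 hcC using fun i =>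
    exists_curve_near (hCsub i) (hCconn i) (hCunbdd i) (hC0 i) hε (2 * R)
  let T : (Fin p ⊕ Fin p → ℝ) → Fin p → ℝ := fun x i => x (Sum.inl i)
  have hT : ∀ x ∈ Icc (0 : Fin p ⊕ Fin p → ℝ) 1, T x ∈ Icc (0 : Fin p → ℝ) 1 := fun x hx =>
    ⟨fun i => hx.1 _, fun i => hx.2 _⟩
  let a : (Fin p ⊕ Fin p → ℝ) → Fin p → ℝ := fun x i => fold (y (T x) i).1 (y (T x) i).2
  let b : (Fin p ⊕ Fin p → ℝ) → Fin p → ℝ := fun x i => fold (y (T x) i).2 (y (T x) i).1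
  have hTc : Continuous T := by fun_prop
  have hac : ∀ i, Continuous fun x => a x i := fun i =>
    continuous_fold.comp (f := fun x => y (T x) i) (by fun_prop)
  have hbc : ∀ i, Continuous fun x => b x i := fun i =>
    continuous_fold.comp (f := fun x => ((y (T x) i).2, (y (T x) i).1)) (by fun_prop)
  obtain ⟨x, hx, hzero⟩ := poincare_miranda
    (fun x => Sum.elim
      (fun i => b x i * (c i (x (Sum.inr i))).1 - a x i * (c i (x (Sum.inr i))).2)
      (fun i => (c i (x (Sum.inr i))).1 + (c i (x (Sum.inr i))).2 - (a x i + b x i)))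
    (by
      refine continuous_pi fun j => ?_
      rcases j with i | i <;> simp only [Sum.elim_inl, Sum.elim_inr] <;> fun_prop)
    (by
      rintro x hx (i | i) hi <;> simp only [Sum.elim_inl, Sum.elim_inr]
      · have h1 : 0 ≤ (y (T x) i).1 := hy0 _ (hT x hx) i hi
        have ha : 0 ≤ a x i := fold_nonneg h1
        have hb : b x i ≤ 0 := fold_nonpos h1
        have := hcneg i (x (Sum.inr i))
        nlinarith [mul_nonneg_of_nonpos_of_nonpos hb this.1, mul_nonpos_of_nonneg_of_nonpos ha this.2]
      · rw [hi, hc0]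
        have : a x i + b x i ≤ 0 := fold_add_fold_nonpos _ _
        simp only [Prod.fst_zero, Prod.snd_zero]
        linarith)
    (by
      rintro x hx (i | i) hi <;> simp only [Sum.elim_inl, Sum.elim_inr]
      · have h1 : 0 ≤ (y (T x) i).2 := hy1 _ (hT x hx) i hi
        have hb : 0 ≤ b x i := fold_nonneg h1
        have ha : a x i ≤ 0 := fold_nonpos h1
        have := hcneg i (x (Sum.inr i))
        nlinarith [mul_nonneg_of_nonpos_of_nonpos ha this.2, mul_nonpos_of_nonneg_of_nonpos hb this.1]
      · rw [hi]
        have h1 := hc1 i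
        have h2 : ‖y (T x) i‖ ≤ R := (norm_le_pi_norm _ i).trans (hR _ (hT x hx))
        have h3 : |(y (T x) i).1| ≤ R := (norm_fst_le (y (T x) i)).trans h2
        have h4 : |(y (T x) i).2| ≤ R := (norm_snd_le (y (T x) i)).trans h2
        have h5 : -|(y (T x) i).1| ≤ a x i := fold_ge _ _
        have h6 : -|(y (T x) i).2| ≤ b x i := fold_ge _ _
        linarith)
  refine ⟨T x, hT x hx, fun i => ?_⟩
  have hl : b x i * (c i (x (Sum.inr i))).1 - a x i * (c i (x (Sum.inr i))).2 = 0 :=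
    congrFun hzero (Sum.inl i)
  have hr : (c i (x (Sum.inr i))).1 + (c i (x (Sum.inr i))).2 - (a x i + b x i) = 0 :=
    congrFun hzero (Sum.inr i)
  rcases of_fold_eq (hcneg i _).1 (hcneg i _).2 hl (by linarith) with h | h
  · exact ⟨y (T x) i, Or.inl ⟨h.1, h.2⟩, by simpa using hε⟩
  · obtain ⟨z, hz, hd⟩ := hcC i (x (Sum.inr i))
    refine ⟨z, Or.inr hz, ?_⟩
    rwa [show y (T x) i = c i (x (Sum.inr i)) from Prod.ext h.1 h.2]

/-- A family of points `y t i` of the plane that lies in `{μ ≥ 0}` on the face `t i = 0` and in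
`{ν ≥ 0}` on the face `t i = 1` meets all the sets `Q ∪ C i` for a common `t`, where `Q` is the
nonnegative quadrant. -/
theorem exists_crossing {p : ℕ} (y : (Fin p → ℝ) → Fin p → ℝ × ℝ) (hy : Continuous y)
    (hy0 : ∀ t ∈ Icc (0 : Fin p → ℝ) 1, ∀ i, t i = 0 → 0 ≤ (y t i).1)
    (hy1 : ∀ t ∈ Icc (0 : Fin p → ℝ) 1, ∀ i, t i = 1 → 0 ≤ (y t i).2)
    (C : Fin p → Set (ℝ × ℝ)) (hCsub : ∀ i, C i ⊆ Iic (0:ℝ) ×ˢ Iic (0:ℝ))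
    (hCclosed : ∀ i, IsClosed (C i))
    (hCconn : ∀ i, IsConnected (C i)) (hCunbdd : ∀ i, ¬ Bornology.IsBounded (C i))
    (hC0 : ∀ i, (0:ℝ × ℝ) ∈ C i) :
    ∃ t ∈ Icc (0 : Fin p → ℝ) 1, ∀ i, y t i ∈ Ici (0:ℝ) ×ˢ Ici (0:ℝ) ∪ C i := by
  set S : Fin p → Set (ℝ × ℝ) := fun i => Ici (0:ℝ) ×ˢ Ici (0:ℝ) ∪ C i with hS
  have hSc : ∀ i, IsClosed (S i) := fun i => (isClosed_Ici.prod isClosed_Ici).union (hCclosed i)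
  have hSn : ∀ i, (S i).Nonempty := fun i => ⟨0, Or.inr (hC0 i)⟩
  let φ : (Fin p → ℝ) → ℝ := fun t => ∑ i, Metric.infDist (y t i) (S i)
  have hφ : Continuous φ := continuous_finsetSum _ fun i _ =>
    (Metric.continuous_infDist_pt _).comp (by fun_prop)
  obtain ⟨t, ht, hmin⟩ := (isCompact_Icc (a := (0 : Fin p → ℝ)) (b := 1)).exists_isMinOn
    ⟨0, by simp⟩ hφ.continuousOn
  refine ⟨t, ht, fun i => ?_⟩
  have hle : φ t ≤ 0 := by
    refine le_of_forall_pos_le_add fun δ hδ => ?_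
    rw [zero_add]
    obtain ⟨t', ht', h'⟩ := exists_approx_crossing y hy hy0 hy1 C hCsub hCconn hCunbdd hC0
      (ε := δ / (p + 1)) (by positivity)
    calc φ t ≤ φ t' := hmin ht'
      _ ≤ ∑ _i : Fin p, δ / (p + 1) := Finset.sum_le_sum fun i _ => by
          obtain ⟨z, hz, hd⟩ := h' i
          exact (Metric.infDist_le_dist_of_mem hz).trans hd.le
      _ = p * (δ / (p + 1)) := by simp
      _ ≤ δ := by
          rw [mul_div_assoc', div_le_iff₀ (by positivity)]; nlinarith
  have hi : Metric.infDist (y t i) (S i) = 0 :=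
    le_antisymm ((Finset.single_le_sum (f := fun i => Metric.infDist (y t i) (S i))
      (fun j _ => Metric.infDist_nonneg) (Finset.mem_univ i)).trans hle) Metric.infDist_nonneg
  exact ((hSc i).mem_iff_infDist_zero (hSn i)).2 hi

/-! ### Multilinear interpolation of multipliers -/

/-- The weight of the vertex `α` of the cube `[0,1]^p` in the multilinear interpolation at `t`. -/
def vertexWeight {p : ℕ} (t : Fin p → ℝ) (α : Fin p → Bool) : ℝ :=
  ∏ i, if α i then t i else 1 - t i

theorem vertexWeight_eq_zero {p : ℕ} {t : Fin p → ℝ} {α : Fin p → Bool} (i : Fin p)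
    (hi : (if α i then t i else 1 - t i) = 0) : vertexWeight t α = 0 :=
  Finset.prod_eq_zero (Finset.mem_univ i) hi

theorem vertexWeight_sum {p : ℕ} (t : Fin p → ℝ) : ∑ α, vertexWeight t α = 1 := by
  have h := Fintype.prod_sum (fun (i : Fin p) (b : Bool) => if b then t i else 1 - t i)
  unfold vertexWeight
  rw [← h]
  simp

theorem vertexWeight_nonneg {p : ℕ} {t : Fin p → ℝ} (ht : t ∈ Icc (0 : Fin p → ℝ) 1)
    (α : Fin p → Bool) : 0 ≤ vertexWeight t α := by
  refine Finset.prod_nonneg fun i _ => ?_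
  have h0 : 0 ≤ t i := ht.1 i
  have h1 : t i ≤ 1 := ht.2 i
  split_ifs <;> linarith

theorem convex_mpccWeakMult {n l m p : ℕ} (f : Rn n → ℝ) (g : Fin l → Rn n → ℝ)
    (h : Fin m → Rn n → ℝ) (G H : Fin p → Rn n → ℝ) (xb : Rn n) :
    Convex ℝ {x : (Fin l → ℝ) × (Fin m → ℝ) × (Fin p → ℝ) × (Fin p → ℝ) |
      MpccWeakMult f g h G H xb x.1 x.2.1 x.2.2.1 x.2.2.2} := by
  rintro ⟨l₁, e₁, m₁, n₁⟩ ⟨h1, h2, h3, h4, h5⟩ ⟨l₂, e₂, m₂, n₂⟩ ⟨k1, k2, k3, k4, k5⟩ a b ha hb hab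
  simp only at h1 h2 h3 h4 h5 k1 k2 k3 k4 k5
  refine ⟨?_, ?_, ?_, ?_, ?_⟩
  · simp only [Prod.fst_add, Prod.snd_add, Prod.smul_fst, Prod.smul_snd, Pi.add_apply,
      Pi.smul_apply, smul_eq_mul, add_smul, mul_smul, Finset.sum_add_distrib, ← Finset.smul_sum]
    have hsplit : gradient f xb = a • gradient f xb + b • gradient f xb := by
      rw [← add_smul, hab, one_smul]
    have key := congrArg₂ (fun u v => a • u + b • v) h1 k1
    simp only [smul_zero, add_zero] at key
    rw [← key]
    conv_lhs => rw [hsplit]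
    module
  · intro i hi
    have := h2 i hi
    have := k2 i hi
    simp only [Prod.fst_add, Prod.smul_fst, Pi.add_apply, Pi.smul_apply, smul_eq_mul]
    positivity
  · intro i hi
    simp [h3 i hi, k3 i hi]
  · intro i hi hi'
    simp [h4 i hi hi', k4 i hi hi']
  · intro i hi hi'
    simp [h5 i hi hi', k5 i hi hi']

/-- from A_α-stationarity for all α ∈ {0,1}^p one obtains weakly
stationary multipliers whose biactive components lie in the S-stationarity
quadrant or in the prescribed sets C_i. -/
theorem mpcc_AStat_all_implies_CSet_stat {n l m p : ℕ} (f : Rn n → ℝ) (g : Fin l → Rn n → ℝ)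
    (h : Fin m → Rn n → ℝ) (G H : Fin p → Rn n → ℝ) (xb : Rn n)
    (hf : Differentiable ℝ f) (hg : ∀ i, Differentiable ℝ (g i))
    (hh : ∀ i, Differentiable ℝ (h i)) (hG : ∀ i, Differentiable ℝ (G i))
    (hH : ∀ i, Differentiable ℝ (H i))
    (hfeas : xb ∈ MpccFeasible g h G H)
    (C : Fin p → Set (ℝ × ℝ))
    (hCsub : ∀ i, C i ⊆ Set.Iic (0:ℝ) ×ˢ Set.Iic (0:ℝ))
    (hCclosed : ∀ i, IsClosed (C i))
    (hCconn : ∀ i, IsConnected (C i))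
    (hCunbdd : ∀ i, ¬ Bornology.IsBounded (C i))
    (hC0 : ∀ i, (0:ℝ × ℝ) ∈ C i)
    (hA : ∀ α : Fin p → ℝ, IsBinaryVec α → MpccAStat f g h G H xb α) :
    ∃ lam eta mu nu, MpccWeakMult f g h G H xb lam eta mu nu ∧
      ∀ i, G i xb = 0 → H i xb = 0 →
        (0 ≤ mu i ∧ 0 ≤ nu i) ∨ (mu i, nu i) ∈ C i := by
  classical
  choose lam eta mu nu hW hmu hnu using fun α : Fin p → Bool =>
    hA (fun i => if α i then 1 else 0) (fun i => by cases α i <;> simp)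
  let bi : Fin p → Prop := fun i => G i xb = 0 ∧ H i xb = 0
  -- At a non-biactive index the pair is set to the origin, so that it imposes no condition.
  let X : (Fin p → Bool) → Fin p → ℝ × ℝ := fun α i => if bi i then (mu α i, nu α i) else 0
  let y : (Fin p → ℝ) → Fin p → ℝ × ℝ := fun t i => ∑ α, vertexWeight t α • X α i
  have hw : ∀ α : Fin p → Bool, Continuous fun t : Fin p → ℝ => vertexWeight t α := fun α =>
    continuous_finsetProd _ fun i _ => by cases α i <;> simp <;> fun_prop
  have hyc : Continuous y := continuous_pi fun i =>
    continuous_finsetSum _ fun α _ => (hw α).smul continuous_const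
  have hX0 : ∀ α i, α i = false → 0 ≤ (X α i).1 := by
    intro α i hα
    by_cases hb : bi i
    · simpa [X, hb] using hmu α i hb.1 hb.2 (by simp [hα])
    · simp [X, hb]
  have hX1 : ∀ α i, α i = true → 0 ≤ (X α i).2 := by
    intro α i hα
    by_cases hb : bi i
    · simpa [X, hb] using hnu α i hb.1 hb.2 (by simp [hα])
    · simp [X, hb]
  obtain ⟨t, ht, hgood⟩ := exists_crossing y hyc
    (by
      intro t ht i hi
      simp only [y, Prod.fst_sum, Prod.smul_fst, smul_eq_mul]
      refine Finset.sum_nonneg fun α _ => ?_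
      cases hα : α i
      · exact mul_nonneg (vertexWeight_nonneg ht α) (hX0 α i hα)
      · rw [vertexWeight_eq_zero i (by simp [hα, hi]), zero_mul])
    (by
      intro t ht i hi
      simp only [y, Prod.snd_sum, Prod.smul_snd, smul_eq_mul]
      refine Finset.sum_nonneg fun α _ => ?_
      cases hα : α i
      · rw [vertexWeight_eq_zero i (by simp [hα, hi]), zero_mul]
      · exact mul_nonneg (vertexWeight_nonneg ht α) (hX1 α i hα))
    C hCsub hCclosed hCconn hCunbdd hC0
  have hmem := (convex_mpccWeakMult f g h G H xb).sum_mem (t := Finset.univ)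
    (w := vertexWeight t) (z := fun α => (lam α, eta α, mu α, nu α))
    (fun α _ => vertexWeight_nonneg ht α) (vertexWeight_sum t) (fun α _ => hW α)
  refine ⟨_, _, _, _, hmem, fun i hGi hHi => ?_⟩
  have hpair : y t i =
      ((∑ α, vertexWeight t α • ((lam α, eta α, mu α, nu α) :
          (Fin l → ℝ) × (Fin m → ℝ) × (Fin p → ℝ) × (Fin p → ℝ))).2.2.1 i,
        (∑ α, vertexWeight t α • ((lam α, eta α, mu α, nu α) :
          (Fin l → ℝ) × (Fin m → ℝ) × (Fin p → ℝ) × (Fin p → ℝ))).2.2.2 i) := by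
    have hb : bi i := ⟨hGi, hHi⟩
    ext <;> simp [y, X, hb, Prod.fst_sum, Prod.snd_sum]
  have hi := hgood i
  rw [hpair] at hi
  exact hi.imp (fun hq => ⟨hq.1, hq.2⟩) id
end
end

section
/- If a feasible point x̄ of the MPCC is A_α-stationary for every α ∈ {0,1}^p, then x̄ is C_d-stationary for every d ∈ [0,1]^p. In particular, if x̄ is a local minimizer of the MPCC at which MPCC-GCQ holds, then x̄ is C_d-stationary for every d ∈ [0,1]^p. -/
/-!
Suppose `xb` is `A_α`-stationary for all `2^p` vectors `α`, and choose multipliers for each `α`.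
Interpolate them multilinearly over the cube `[0, 1]^p`. Since the weak stationarity system is
convex (`weakMult_convexComb`), every point `t` of the cube gives weak multipliers, and for every
biactive `i` the interpolated `μ i` is nonnegative on the face `t i = 0` and `ν i` is nonnegative on
the face `t i = 1`. The function `cGap (d i) μ ν = ((1 - d i) μ - d i ν) (μ⁻ + ν⁻)` is then
nonnegative on the first face and nonpositive on the second, and its vanishing is (at least) the
`C_d` condition for the index `i`. The Poincaré–Miranda theorem gives a common zero of these
functions, which is `C_d`-stationarity (`cStat_of_forall_aStat`).

The Poincaré–Miranda theorem (`poincare_miranda`) is derived from a Sperner-type argument in Kuhn's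
triangulation of the whole space. Counting doors modulo 2 shows that the parity of the number of
fully labelled simplices is unaffected by changing the labelling in a bounded box
(`finsum_kuhnFull_sub`); the labelling by the least positive coordinate has exactly one such simplex
(`kuhnFull_canonical`), so every labelling agreeing with it outside a box has at least one.

For a local minimizer, `-∇f` is polar to the tangent cone, hence under MPCC-GCQ to the
MPCC-linearized cone. The latter contains the polyhedral linearized cone of each branch `α`, so that
Farkas' lemma (`farkas`) gives `A_α`-stationarity for every `α` (`aStat_of_polar`).
-/

open Set Filter RealInnerProductSpace

noncomputable section

variable {n l m p : ℕ}

/-! ### Parity of fully labelled simplices in Kuhn's triangulation -/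

/-- Sperner's parity count inside a single simplex. Its `n + 1` vertices carry labels in
`{0, …, n}`; the number of facets whose labels are exactly `{0, …, n - 1}` is odd if and only if
all labels occur. If all labels occur, the only such facet is the one opposite the vertex labelled
`n`; otherwise there are none, or exactly two, opposite the two vertices sharing a label. -/
theorem label_parity (n : ℕ) (a : ℕ → ℕ) (ha : ∀ k, a k ≤ n) :
    (∑ k ∈ Finset.range (n + 1),
      if ((Finset.range (n + 1)).erase k).image a = Finset.range n then (1 : ZMod 2) else 0) =
      if (Finset.range (n + 1)).image a = Finset.range (n + 1) then 1 else 0 := by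
  classical
  rw [Finset.sum_boole]
  by_cases hC : (Finset.range (n + 1)).image a = Finset.range (n + 1)
  · rw [if_pos hC]
    have hinj : Set.InjOn a (Finset.range (n + 1)) := by
      apply Finset.injOn_of_card_image_eq
      rw [hC]
    obtain ⟨k, hk, hak⟩ : ∃ k ∈ Finset.range (n + 1), a k = n := by
      have : n ∈ (Finset.range (n + 1)).image a := by rw [hC]; simp
      simpa using this
    have : (Finset.range (n + 1)).filter
        (fun k => ((Finset.range (n + 1)).erase k).image a = Finset.range n) = {k} := by
      ext j
      simp only [Finset.mem_filter, Finset.mem_singleton]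
      constructor
      · rintro ⟨hj, hD⟩
        by_contra hne
        have : a k ∈ ((Finset.range (n + 1)).erase j).image a :=
          Finset.mem_image_of_mem _ (Finset.mem_erase.2 ⟨fun h => hne h.symm, hk⟩)
        rw [hD, hak] at this
        simp at this
      · rintro rfl
        refine ⟨hk, ?_⟩
        rw [Finset.erase_eq, Finset.image_sdiff_of_injOn hinj (by simpa using hk), hC]
        ext i
        simp [hak]
        omega
    rw [this]
    simp
  · rw [if_neg hC]
    by_cases hD : ∃ k ∈ Finset.range (n + 1),
        ((Finset.range (n + 1)).erase k).image a = Finset.range n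
    · obtain ⟨k, hk, hDk⟩ := hD
      have hakn : a k < n := by
        refine lt_of_le_of_ne (ha k) fun h => hC ?_
        have h2 := congrArg (Finset.image a) (Finset.insert_erase hk)
        rw [Finset.image_insert, hDk, h, ← Finset.range_add_one] at h2
        exact h2.symm
      obtain ⟨k', hk', hakk⟩ : ∃ k' ∈ (Finset.range (n + 1)).erase k, a k' = a k := by
        have : a k ∈ ((Finset.range (n + 1)).erase k).image a := by rw [hDk]; simpa using hakn
        simpa using this
      have hk'' := Finset.mem_erase.1 hk'
      have himg : (Finset.range (n + 1)).image a = Finset.range n := by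
        rw [← Finset.insert_erase hk, Finset.image_insert, hDk]
        simpa using hakn
      have hinj : Set.InjOn a ((Finset.range (n + 1)).erase k) := by
        apply Finset.injOn_of_card_image_eq
        rw [hDk, Finset.card_erase_of_mem hk]; simp
      have : (Finset.range (n + 1)).filter
          (fun k => ((Finset.range (n + 1)).erase k).image a = Finset.range n) = {k, k'} := by
        ext j
        simp only [Finset.mem_filter, Finset.mem_singleton, Finset.mem_insert]
        constructor
        · rintro ⟨hj, hDj⟩
          by_contra! hne
          have h2 : Set.InjOn a ((Finset.range (n + 1)).erase j) := by
            apply Finset.injOn_of_card_image_eq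
            rw [hDj, Finset.card_erase_of_mem hj]; simp
          have := h2 (Finset.mem_coe.2 (Finset.mem_erase.2 ⟨hne.2.symm, hk''.2⟩))
            (Finset.mem_coe.2 (Finset.mem_erase.2 ⟨hne.1.symm, hk⟩)) hakk
          exact hk''.1 this
        · rintro (rfl | rfl)
          · exact ⟨hk, hDk⟩
          · refine ⟨hk''.2, ?_⟩
            rw [← himg]
            apply Finset.Subset.antisymm (Finset.image_subset_image (Finset.erase_subset _ _))
            intro y hy
            obtain ⟨i, hi, rfl⟩ := Finset.mem_image.1 hy
            by_cases hij : i = j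
            · subst hij
              rw [hakk]
              exact Finset.mem_image_of_mem _ (Finset.mem_erase.2 ⟨hk''.1.symm, hk⟩)
            · exact Finset.mem_image_of_mem _ (Finset.mem_erase.2 ⟨hij, hi⟩)
      rw [this, Finset.card_pair hk''.1.symm]
      decide
    · rw [Finset.filter_eq_empty_iff.2 (fun k hk h => hD ⟨k, hk, h⟩)]
      simp

/-- The `k`-th vertex, `0 ≤ k ≤ n + 1`, of a simplex of Kuhn's triangulation of `ℝ^(n+1)`. A
simplex is encoded by its base point `x ∈ ℤ^(n+1)` and a permutation `τ`: coordinate `i` is raised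
by one at step `τ i`, so the vertices lead from `x` to `x + (1, …, 1)`. -/
def kuhnVertex {n : ℕ} (q : (Fin (n + 1) → ℤ) × Equiv.Perm (Fin (n + 1))) (k : ℕ) :
    Fin (n + 1) → ℤ :=
  fun i => q.1 i + if (q.2 i : ℕ) < k then 1 else 0

/-- The indicator, modulo 2, that the facet of `q` opposite vertex `k` is a door: its labels are
exactly `{0, …, n}`. -/
def kuhnDoor {n : ℕ} (lab : (Fin (n + 1) → ℤ) → ℕ) (k : ℕ)
    (q : (Fin (n + 1) → ℤ) × Equiv.Perm (Fin (n + 1))) : ZMod 2 :=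
  if ((Finset.range (n + 2)).erase k).image (fun j => lab (kuhnVertex q j)) = Finset.range (n + 1)
  then 1 else 0

/-- The indicator, modulo 2, that the vertices of `q` carry all labels `{0, …, n + 1}`. -/
def kuhnFull {n : ℕ} (lab : (Fin (n + 1) → ℤ) → ℕ)
    (q : (Fin (n + 1) → ℤ) × Equiv.Perm (Fin (n + 1))) : ZMod 2 :=
  if (Finset.range (n + 2)).image (fun j => lab (kuhnVertex q j)) = Finset.range (n + 2)
  then 1 else 0

/-- A facet opposite an intermediate vertex `k` is shared by exactly two simplices with the same
base point, obtained from each other by swapping steps `k - 1` and `k`; so such doors cancel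
modulo 2. -/
theorem sum_kuhnDoor_mid {n : ℕ} (lab : (Fin (n + 1) → ℤ) → ℕ) (x : Fin (n + 1) → ℤ)
    (k : ℕ) (hk0 : 0 < k) (hk : k < n + 1) :
    ∑ τ, kuhnDoor lab k (x, τ) = 0 := by
  have hne : (⟨k - 1, by omega⟩ : Fin (n + 1)) ≠ ⟨k, hk⟩ := by
    simp [Fin.ext_iff]; omega
  have hinv : ∀ τ : Equiv.Perm (Fin (n + 1)),
      kuhnDoor lab k (x, τ.trans (Equiv.swap ⟨k - 1, by omega⟩ ⟨k, hk⟩)) =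
        kuhnDoor lab k (x, τ) := by
    intro τ
    have hv : ∀ j ∈ (Finset.range (n + 2)).erase k,
        lab (kuhnVertex (x, τ.trans (Equiv.swap ⟨k - 1, by omega⟩ ⟨k, hk⟩)) j) =
          lab (kuhnVertex (x, τ) j) := by
      intro j hj
      have hjk := (Finset.mem_erase.1 hj).1
      congr 1
      funext i
      have key : (Equiv.swap (⟨k - 1, by omega⟩ : Fin (n + 1)) ⟨k, hk⟩ (τ i) : ℕ) < j ↔
          (τ i : ℕ) < j := by
        by_cases h1 : τ i = ⟨k - 1, by omega⟩
        · rw [h1, Equiv.swap_apply_left]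
          simp only
          omega
        · by_cases h2 : τ i = ⟨k, hk⟩
          · rw [h2, Equiv.swap_apply_right]
            simp only
            omega
          · rw [Equiv.swap_apply_of_ne_of_ne h1 h2]
      simp only [kuhnVertex, Equiv.trans_apply, key]
    unfold kuhnDoor
    rw [Finset.image_congr (fun j hj => hv j (Finset.mem_coe.1 hj))]
  refine Finset.sum_involution (fun τ _ => τ.trans (Equiv.swap ⟨k - 1, by omega⟩ ⟨k, hk⟩))
    ?_ ?_ ?_ ?_
  · intro τ _
    rw [hinv]
    exact CharTwo.add_self_eq_zero _
  · intro τ _ _ h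
    have := congrArg (fun e => e (τ.symm ⟨k, hk⟩)) h
    simp at this
    omega
  · simp
  · intro τ _
    ext i
    simp

/-- The bijection sending a simplex to its neighbour across the facet opposite vertex `0`: the
first step is performed on the base point and moved to the end of the sequence of steps. -/
def kuhnShift (n : ℕ) : ((Fin (n + 1) → ℤ) × Equiv.Perm (Fin (n + 1))) ≃
    ((Fin (n + 1) → ℤ) × Equiv.Perm (Fin (n + 1))) where
  toFun q := (fun i => q.1 i + if q.2 i = 0 then 1 else 0, q.2.trans (finRotate (n + 1)).symm)
  invFun q := (fun i => q.1 i - if q.2 i = Fin.last n then 1 else 0, q.2.trans (finRotate (n + 1)))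
  left_inv q := by
    ext i
    · have : (finRotate (n + 1)).symm (q.2 i) = Fin.last n ↔ q.2 i = 0 := by
        rw [Equiv.symm_apply_eq, finRotate_last]
      simp only [Equiv.trans_apply, this, add_sub_cancel_right]
    · simp
  right_inv q := by
    ext i
    · have : (finRotate (n + 1)) (q.2 i) = 0 ↔ q.2 i = Fin.last n := by
        rw [← finRotate_last, EmbeddingLike.apply_eq_iff_eq]
      simp only [Equiv.trans_apply, this, sub_add_cancel]
    · simp

theorem kuhnVertex_shift {n : ℕ} (q : (Fin (n + 1) → ℤ) × Equiv.Perm (Fin (n + 1))) (j : ℕ)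
    (hj : j < n + 1) : kuhnVertex (kuhnShift n q) j = kuhnVertex q (j + 1) := by
  funext i
  obtain ⟨r, hr⟩ : ∃ r, q.2 i = finRotate (n + 1) r := ⟨_, ((finRotate (n+1)).apply_symm_apply _).symm⟩
  simp only [kuhnVertex, kuhnShift, Equiv.coe_fn_mk, Equiv.trans_apply, hr,
    Equiv.symm_apply_apply]
  rw [add_assoc]
  congr 1
  rcases eq_or_ne r (Fin.last n) with rfl | h
  · rw [finRotate_last]; simp; omega
  · have h1 : (finRotate (n + 1) r : ℕ) = r + 1 := coe_finRotate_of_ne_last h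
    have h2 : finRotate (n + 1) r ≠ 0 := by
      intro h; rw [h] at h1; simp at h1
    rw [if_neg h2, h1]
    simp

/-- The facet opposite vertex `0` of `q` is the facet opposite the last vertex of its neighbour
`kuhnShift n q`. -/
theorem kuhnDoor_shift {n : ℕ} (lab : (Fin (n + 1) → ℤ) → ℕ)
    (q : (Fin (n + 1) → ℤ) × Equiv.Perm (Fin (n + 1))) :
    kuhnDoor lab (n + 1) (kuhnShift n q) = kuhnDoor lab 0 q := by
  unfold kuhnDoor
  congr 2
  ext y
  simp only [Finset.mem_image, Finset.mem_erase, Finset.mem_range]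
  constructor
  · rintro ⟨j, ⟨h1, h2⟩, rfl⟩
    exact ⟨j + 1, ⟨by omega, by omega⟩, by rw [kuhnVertex_shift q j (by omega)]⟩
  · rintro ⟨j, ⟨h1, h2⟩, rfl⟩
    refine ⟨j - 1, ⟨by omega, by omega⟩, ?_⟩
    rw [kuhnVertex_shift q (j - 1) (by omega), Nat.sub_add_cancel (by omega)]

/-- Two labellings that agree outside a box have, modulo 2, the same number of fully labelled
simplices. The numbers themselves need not be finite, so the statement concerns the differences,
which vanish away from the box. By `label_parity` a simplex is full iff its number of doors is odd,
and each facet belongs to two simplices. -/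
theorem finsum_kuhnFull_sub {n : ℕ} (lab lab' : (Fin (n + 1) → ℤ) → ℕ) (N : ℤ)
    (hl : ∀ x, lab x ≤ n + 1) (hl' : ∀ x, lab' x ≤ n + 1)
    (h : ∀ x, x ∉ Set.Icc (fun _ => 0) (fun _ => N) → lab x = lab' x) :
    ∑ᶠ q, (kuhnFull lab q - kuhnFull lab' q) = 0 := by
  classical
  set S : Finset ((Fin (n + 1) → ℤ) × Equiv.Perm (Fin (n + 1))) :=
    (Finset.Icc (fun _ => -1) (fun _ => N)) ×ˢ Finset.univ with hS
  have hout : ∀ q ∉ S, ∀ j, lab (kuhnVertex q j) = lab' (kuhnVertex q j) := by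
    intro q hq j
    apply h
    intro hm
    apply hq
    simp only [hS, Finset.mem_product, Finset.mem_univ, and_true, Finset.mem_Icc]
    constructor
    · intro i
      have := hm.1 i
      simp only [kuhnVertex] at this
      split_ifs at this <;> simp <;> omega
    · intro i
      have := hm.2 i
      simp only [kuhnVertex] at this
      split_ifs at this <;> simp <;> omega
  have hD : ∀ k, (fun q => kuhnDoor lab k q - kuhnDoor lab' k q).support ⊆ S := by
    intro k q hq
    by_contra hqS
    apply hq
    simp only [kuhnDoor, hout q (by simpa using hqS), sub_self]
  have hpar : ∀ q, kuhnFull lab q - kuhnFull lab' q =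
      ∑ k ∈ Finset.range (n + 2), (kuhnDoor lab k q - kuhnDoor lab' k q) := by
    intro q
    rw [Finset.sum_sub_distrib]
    unfold kuhnFull kuhnDoor
    rw [← label_parity (n + 1) _ (fun k => hl _), ← label_parity (n + 1) _ (fun k => hl' _)]
  have hsum : ∀ k, ∑ᶠ q, (kuhnDoor lab k q - kuhnDoor lab' k q) =
      ∑ q ∈ S, (kuhnDoor lab k q - kuhnDoor lab' k q) :=
    fun k => finsum_eq_sum_of_support_subset _ (hD k)
  have hmid : ∀ k, 0 < k → k < n + 1 →
      ∑ᶠ q, (kuhnDoor lab k q - kuhnDoor lab' k q) = 0 := by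
    intro k h0 h1
    rw [hsum, hS, Finset.sum_product]
    apply Finset.sum_eq_zero
    intro x _
    rw [Finset.sum_sub_distrib, sum_kuhnDoor_mid lab x k h0 h1, sum_kuhnDoor_mid lab' x k h0 h1,
      sub_self]
  have hend : ∑ᶠ q, (kuhnDoor lab 0 q - kuhnDoor lab' 0 q) =
      ∑ᶠ q, (kuhnDoor lab (n + 1) q - kuhnDoor lab' (n + 1) q) := by
    rw [← finsum_comp_equiv (kuhnShift n)
      (f := fun q => kuhnDoor lab (n + 1) q - kuhnDoor lab' (n + 1) q)]
    simp only [kuhnDoor_shift]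
  simp only [hpar]
  rw [finsum_sum_comm _ _ (fun k _ => S.finite_toSet.subset (hD k)), Finset.sum_range_succ,
    Finset.sum_range_succ', Finset.sum_eq_zero, zero_add, hend]
  · exact CharTwo.add_self_eq_zero _
  · intro k hk
    exact hmid _ (by omega) (by simpa using hk)

/-! ### The Poincaré–Miranda theorem -/

/-- The least index `i` for which `P i` holds, and `n + 1` if there is none: `n + 1` belongs to
the set vacuously. -/
def leastLabel {n : ℕ} (P : Fin (n + 1) → Prop) : ℕ :=
  sInf {k : ℕ | ∀ h : k < n + 1, P ⟨k, h⟩}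

theorem leastLabel_le {n : ℕ} (P : Fin (n + 1) → Prop) : leastLabel P ≤ n + 1 :=
  Nat.sInf_le (fun h => absurd h (lt_irrefl _))

theorem leastLabel_spec {n : ℕ} (P : Fin (n + 1) → Prop) (i : Fin (n + 1))
    (h : leastLabel P = i) : P i := by
  have hmem : leastLabel P ∈ {k : ℕ | ∀ h : k < n + 1, P ⟨k, h⟩} :=
    Nat.sInf_mem ⟨n + 1, fun h => absurd h (lt_irrefl _)⟩
  rw [h] at hmem
  exact hmem i.2

theorem leastLabel_le_of {n : ℕ} (P : Fin (n + 1) → Prop) (i : Fin (n + 1)) (h : P i) :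
    leastLabel P ≤ i :=
  Nat.sInf_le (fun _ => h)

theorem leastLabel_anti {n : ℕ} {P Q : Fin (n + 1) → Prop} (h : ∀ i, P i → Q i) :
    leastLabel Q ≤ leastLabel P := by
  rcases (leastLabel_le P).lt_or_eq with h1 | h1
  · exact leastLabel_le_of Q ⟨_, h1⟩ (h _ (leastLabel_spec P ⟨_, h1⟩ rfl))
  · rw [h1]; exact leastLabel_le Q

theorem kuhnVertex_ge {n : ℕ} (q : (Fin (n + 1) → ℤ) × Equiv.Perm (Fin (n + 1))) (k : ℕ)
    (i : Fin (n + 1)) : q.1 i ≤ kuhnVertex q k i := by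
  simp only [kuhnVertex]; split_ifs <;> omega

theorem kuhnVertex_le {n : ℕ} (q : (Fin (n + 1) → ℤ) × Equiv.Perm (Fin (n + 1))) (k : ℕ)
    (i : Fin (n + 1)) : kuhnVertex q k i ≤ q.1 i + 1 := by
  simp only [kuhnVertex]; split_ifs <;> omega

/-- In a fully labelled simplex every property holds at some vertex (the one with that label),
and at some vertex (the one labelled `n + 1`) no property holds. -/
theorem kuhnFull_spec {n : ℕ} {Q : Fin (n + 1) → (Fin (n + 1) → ℤ) → Prop}
    {q : (Fin (n + 1) → ℤ) × Equiv.Perm (Fin (n + 1))}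
    (hq : (Finset.range (n + 2)).image (fun j => leastLabel (fun i => Q i (kuhnVertex q j))) =
      Finset.range (n + 2)) :
    (∀ i, ∃ k, Q i (kuhnVertex q k)) ∧ ∃ k, ∀ i, ¬ Q i (kuhnVertex q k) := by
  have hex : ∀ c < n + 2, ∃ k, leastLabel (fun i => Q i (kuhnVertex q k)) = c := by
    intro c hc
    have : c ∈ (Finset.range (n + 2)).image
        (fun j => leastLabel (fun i => Q i (kuhnVertex q j))) := by rw [hq]; simpa using hc
    obtain ⟨k, -, hk⟩ := Finset.mem_image.1 this
    exact ⟨k, hk⟩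
  constructor
  · intro i
    obtain ⟨k, hk⟩ := hex i (by omega)
    exact ⟨k, leastLabel_spec _ i hk⟩
  · obtain ⟨k, hk⟩ := hex (n + 1) (by omega)
    refine ⟨k, fun i hi => ?_⟩
    have := leastLabel_le_of (fun i => Q i (kuhnVertex q k)) i hi
    omega

/-- The labelling by the least positive coordinate has exactly one fully labelled simplex: the
one based at the origin that raises the coordinates in decreasing order of index. -/
theorem kuhnFull_canonical {n : ℕ} (q : (Fin (n + 1) → ℤ) × Equiv.Perm (Fin (n + 1))) :
    kuhnFull (fun x => leastLabel (fun i => 0 < x i)) q =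
      if q = (0, Fin.revPerm) then 1 else 0 := by
  unfold kuhnFull
  congr 1
  apply propext
  constructor
  · intro hq
    obtain ⟨h1, k, hk⟩ := kuhnFull_spec (Q := fun i x => 0 < x i) hq
    have hx : q.1 = 0 := by
      funext i
      obtain ⟨j, hj⟩ := h1 i
      have h2 := hk i
      have h3 := kuhnVertex_ge q k i
      have h4 := kuhnVertex_le q j i
      simp only [Pi.zero_apply]
      omega
    set a : ℕ → ℕ := fun j => leastLabel (fun i => 0 < kuhnVertex q j i) with ha
    have hP : ∀ j i, 0 < kuhnVertex q j i ↔ (q.2 i : ℕ) < j := by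
      intro j i
      simp only [kuhnVertex, hx, Pi.zero_apply, zero_add]
      split_ifs <;> simp_all
    have hinj : Set.InjOn a (Finset.range (n + 2)) := by
      apply Finset.injOn_of_card_image_eq
      rw [hq]
    have hle : ∀ j, a j ≤ n + 1 := fun j => leastLabel_le _
    -- Along the vertices more coordinates become positive, so the labels decrease; as they are
    -- distinct, the `j`-th one is `n + 1 - j`, which determines the permutation.
    have hstep : ∀ j, j < n + 1 → a (j + 1) < a j := by
      intro j hj
      refine lt_of_le_of_ne (leastLabel_anti fun i => ?_) fun h => ?_
      · rw [hP, hP]; omega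
      · have := hinj (by simp; omega) (by simp; omega) h
        omega
    have hup : ∀ j, j ≤ n + 1 → a j + j ≤ n + 1 := by
      intro j
      induction j with
      | zero => intro _; simpa using hle 0
      | succ j ih => intro hj; have := ih (by omega); have := hstep j (by omega); omega
    have hdown : ∀ j, j ≤ n + 1 → j ≤ a (n + 1 - j) := by
      intro j
      induction j with
      | zero => intro _; simp
      | succ j ih =>
        intro hj
        have h2 := ih (by omega)
        have h3 := hstep (n + 1 - (j + 1)) (by omega)
        rw [show n + 1 - (j + 1) + 1 = n + 1 - j by omega] at h3
        omega
    have hval : ∀ j, j ≤ n + 1 → a j = n + 1 - j := by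
      intro j hj
      have h2 := hup j hj
      have h3 := hdown (n + 1 - j) (by omega)
      rw [show n + 1 - (n + 1 - j) = j by omega] at h3
      omega
    refine Prod.ext hx (Equiv.ext fun i => Fin.ext ?_)
    have e1 : (q.2 i : ℕ) < n - i + 1 := by
      rw [← hP]
      refine leastLabel_spec (fun i' => 0 < kuhnVertex q (n - i + 1) i') i ?_
      have := hval (n - i + 1) (by omega)
      simp only [ha] at this
      omega
    have e2 : ¬ (q.2 i : ℕ) < n - i := by
      rw [← hP]
      intro h
      have h2 := leastLabel_le_of (fun i' => 0 < kuhnVertex q (n - i) i') i h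
      have := hval (n - i) (by omega)
      simp only [ha] at this
      omega
    simp [Fin.val_rev]
    omega
  · rintro rfl
    have hval : ∀ j, j ≤ n + 1 →
        leastLabel (fun i => 0 < kuhnVertex ((0 : Fin (n + 1) → ℤ), Fin.revPerm) j i) =
          n + 1 - j := by
      intro j hj
      have hP : ∀ i, 0 < kuhnVertex ((0 : Fin (n + 1) → ℤ), Fin.revPerm) j i ↔
          n < (i : ℕ) + j := by
        intro i
        simp only [kuhnVertex, Pi.zero_apply, zero_add, Fin.revPerm_apply, Fin.val_rev]
        split_ifs <;> simp <;> omega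
      simp only [hP]
      apply le_antisymm
      · rcases Nat.eq_zero_or_pos j with rfl | h0
        · exact leastLabel_le _
        · exact leastLabel_le_of _ ⟨n + 1 - j, by omega⟩ (by simp only; omega)
      · rcases (leastLabel_le (fun i : Fin (n + 1) => n < (i : ℕ) + j)).lt_or_eq with h1 | h1
        · have := leastLabel_spec (fun i : Fin (n + 1) => n < (i : ℕ) + j) ⟨_, h1⟩ rfl
          simp only at this
          omega
        · omega
    ext c
    simp only [Finset.mem_image, Finset.mem_range]
    constructor
    · rintro ⟨j, hj, rfl⟩
      rw [hval j (by omega)]; omega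
    · intro hc
      exact ⟨n + 1 - c, by omega, by rw [hval _ (by omega)]; omega⟩

/-- A discrete Poincaré–Miranda theorem. If on the grid `{0, …, N}^(n+1)` each property `P i`
fails on the face `x i = 0` and holds on the face `x i = N`, then some unit cell contains grid
points at which each `P i` holds, and one at which all of them fail. Outside the grid `P i` is
extended by `0 < x i`; comparison with the canonical labelling yields a full simplex, and the face
conditions force it into the grid. -/
theorem discrete_miranda {n : ℕ} (N : ℤ) (hN : 1 ≤ N)
    (P : Fin (n + 1) → (Fin (n + 1) → ℤ) → Prop)
    (h0 : ∀ i x, x ∈ Set.Icc (fun _ => 0) (fun _ => N) → x i = 0 → ¬ P i x)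
    (h1 : ∀ i x, x ∈ Set.Icc (fun _ => 0) (fun _ => N) → x i = N → P i x) :
    ∃ x : Fin (n + 1) → ℤ,
      (∀ i, ∃ y ∈ Set.Icc (fun _ => 0) (fun _ => N), y ∈ Set.Icc x (x + 1) ∧ P i y) ∧
      ∃ y ∈ Set.Icc (fun _ => 0) (fun _ => N), y ∈ Set.Icc x (x + 1) ∧ ∀ i, ¬ P i y := by
  classical
  set B : Set (Fin (n + 1) → ℤ) := Set.Icc (fun _ => 0) (fun _ => N) with hB
  set Q : Fin (n + 1) → (Fin (n + 1) → ℤ) → Prop :=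
    fun i x => (x ∈ B ∧ P i x) ∨ (x ∉ B ∧ 0 < x i) with hQ
  have hsum := finsum_kuhnFull_sub (fun x => leastLabel (fun i => Q i x))
    (fun x => leastLabel (fun i => 0 < x i)) N (fun _ => leastLabel_le _)
    (fun _ => leastLabel_le _) (by
      intro x hx
      simp only [hQ, hB, hx, false_and, not_false_eq_true, true_and, false_or])
  obtain ⟨q, hq⟩ : ∃ q, kuhnFull (fun x => leastLabel (fun i => Q i x)) q ≠ 0 := by
    by_contra! hall
    simp only [hall, kuhnFull_canonical] at hsum
    rw [finsum_eq_single _ (0, Fin.revPerm) (by intro q hq; simp [hq])] at hsum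
    revert hsum
    simp
  have hfull : (Finset.range (n + 2)).image
      (fun j => leastLabel (fun i => Q i (kuhnVertex q j))) = Finset.range (n + 2) := by
    by_contra hne
    exact hq (if_neg hne)
  obtain ⟨hA, k₀, hk₀⟩ := kuhnFull_spec hfull
  have hlow : ∀ x i, x i ≤ 0 → ¬ Q i x := by
    rintro x i hx (⟨hm, hP⟩ | ⟨-, hP⟩)
    · exact h0 i x hm (le_antisymm hx (hm.1 i)) hP
    · omega
  have hhigh : ∀ x i, N ≤ x i → Q i x := by
    intro x i hx
    by_cases hm : x ∈ B
    · exact Or.inl ⟨hm, h1 i x hm (le_antisymm (hm.2 i) hx)⟩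
    · exact Or.inr ⟨hm, by omega⟩
  -- Coordinates within a simplex differ by at most one. If one vertex had coordinate `i` below `0`,
  -- `Q i` would fail at every vertex; if one were above `N`, `Q i` would hold at every vertex.
  have hin : ∀ k, kuhnVertex q k ∈ B := by
    intro k
    constructor
    · intro i
      obtain ⟨j, hj⟩ := hA i
      by_contra hneg
      apply hlow _ _ _ hj
      have := kuhnVertex_ge q k i
      have := kuhnVertex_le q j i
      simp only at hneg
      omega
    · intro i
      by_contra hneg
      apply hk₀ i
      apply hhigh
      have := kuhnVertex_ge q k₀ i
      have := kuhnVertex_le q k i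
      simp only at hneg
      omega
  have hiff : ∀ k i, Q i (kuhnVertex q k) ↔ P i (kuhnVertex q k) := by
    intro k i
    simp [hQ, hin k]
  have hcube : ∀ k, kuhnVertex q k ∈ Set.Icc q.1 (q.1 + 1) :=
    fun k => ⟨fun i => kuhnVertex_ge q k i, fun i => kuhnVertex_le q k i⟩
  refine ⟨q.1, fun i => ?_, _, hin k₀, hcube k₀, fun i => (hiff k₀ i).not.1 (hk₀ i)⟩
  obtain ⟨k, hk⟩ := hA i
  exact ⟨_, hin k, hcube k, (hiff k i).1 hk⟩

/-- The Poincaré–Miranda theorem on `[0, 1]^p`. The discrete version, applied to `ψ i < 0` on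
ever finer grids, produces points `s` and `r i` at vanishing distance with `ψ i s ≥ 0` for all `i`
and `ψ i (r i) ≤ 0`; a cluster point of the `s` is a common zero. -/
theorem poincare_miranda_s8 {p : ℕ} (ψ : Fin p → (Fin p → ℝ) → ℝ)
    (hc : ∀ i, Continuous (ψ i))
    (h0 : ∀ i t, t ∈ Set.Icc (0 : Fin p → ℝ) 1 → t i = 0 → 0 ≤ ψ i t)
    (h1 : ∀ i t, t ∈ Set.Icc (0 : Fin p → ℝ) 1 → t i = 1 → ψ i t ≤ 0) :
    ∃ t ∈ Set.Icc (0 : Fin p → ℝ) 1, ∀ i, ψ i t = 0 := by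
  rcases p with _ | n
  · exact ⟨0, by simp, fun i => i.elim0⟩
  have key : ∀ M : ℕ, ∃ (s : Fin (n + 1) → ℝ) (r : Fin (n + 1) → Fin (n + 1) → ℝ),
      s ∈ Set.Icc (0 : Fin (n + 1) → ℝ) 1 ∧ (∀ i, 0 ≤ ψ i s) ∧ (∀ i, ψ i (r i) ≤ 0) ∧
      ∀ i j, |r i j - s j| ≤ 1 / ((M : ℝ) + 1) := by
    intro M
    have hM : (0 : ℝ) < (M : ℝ) + 1 := by positivity
    set sc : (Fin (n + 1) → ℤ) → (Fin (n + 1) → ℝ) := fun y j => (y j : ℝ) / ((M : ℝ) + 1)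
      with hsc
    have hscmem : ∀ y ∈ Set.Icc (fun _ => 0) (fun _ => (M : ℤ) + 1),
        sc y ∈ Set.Icc (0 : Fin (n + 1) → ℝ) 1 := by
      intro y hy
      constructor
      · intro j
        have : (0 : ℝ) ≤ y j := by exact_mod_cast hy.1 j
        simp only [hsc, Pi.zero_apply]
        positivity
      · intro j
        have : (y j : ℝ) ≤ (M : ℝ) + 1 := by exact_mod_cast hy.2 j
        simp only [hsc, Pi.one_apply]
        rwa [div_le_one hM]
    obtain ⟨x, hA, y, hyB, hyx, hyP⟩ := discrete_miranda (n := n) ((M : ℤ) + 1) (by omega)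
      -- `ψ i` may vanish on the faces, so the truth value there is imposed by hand; the weak
      -- sign conditions still hold by `h0` and `h1`.
      (fun i y => 0 < y i ∧ (y i = (M : ℤ) + 1 ∨ ψ i (sc y) < 0))
      (fun i x _ h h' => by omega) (fun i x _ h => ⟨by omega, Or.inl h⟩)
    choose z hzB hzx hzP using hA
    refine ⟨sc y, fun i => sc (z i), hscmem y hyB, fun i => ?_, fun i => ?_, fun i j => ?_⟩
    · rcases (hyB.1 i).eq_or_lt with h | h
      · exact h0 i _ (hscmem y hyB) (by simp only [hsc]; rw [← h]; simp)
      · by_contra! hneg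
        exact hyP i ⟨h, Or.inr hneg⟩
    · rcases (hzP i).2 with h | h
      · refine h1 i _ (hscmem _ (hzB i)) ?_
        simp only [hsc]
        rw [h]
        push_cast
        exact div_self hM.ne'
      · exact h.le
    · simp only [hsc]
      rw [← sub_div, abs_div, abs_of_pos hM]
      gcongr
      have a1 : (x j : ℝ) ≤ y j := by exact_mod_cast hyx.1 j
      have a2 : (y j : ℝ) ≤ x j + 1 := by exact_mod_cast hyx.2 j
      have a3 : (x j : ℝ) ≤ z i j := by exact_mod_cast (hzx i).1 j
      have a4 : (z i j : ℝ) ≤ x j + 1 := by exact_mod_cast (hzx i).2 j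
      rw [abs_le]
      constructor <;> linarith
  choose s r hs hs0 hr0 hrs using key
  obtain ⟨t, ht, φ, hφ, hlim⟩ := isCompact_Icc.tendsto_subseq hs
  have hr : ∀ i, Tendsto (fun M => r (φ M) i) atTop (nhds t) := by
    intro i
    rw [tendsto_pi_nhds]
    intro j
    have hz : Tendsto (fun M => r (φ M) i j - s (φ M) j) atTop (nhds 0) := by
      refine squeeze_zero_norm (fun M => hrs (φ M) i j) ?_
      exact tendsto_one_div_add_atTop_nhds_zero_nat.comp hφ.tendsto_atTop
    have := hz.add ((tendsto_pi_nhds.1 hlim) j)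
    simpa using this
  refine ⟨t, ht, fun i => le_antisymm ?_ ?_⟩
  · exact le_of_tendsto (((hc i).tendsto t).comp (hr i)) (Eventually.of_forall fun M => hr0 _ i)
  · exact ge_of_tendsto (((hc i).tendsto t).comp hlim) (Eventually.of_forall fun M => hs0 _ i)

/-! ### Farkas' lemma and stationarity of local minimizers -/

/-- Farkas' lemma for finitely many linear functionals on an arbitrary real vector space, by
induction on the number of functionals. -/
theorem farkas {V ι : Type*} [AddCommGroup V] [Module ℝ V] (s : Finset ι)
    (a : ι → Module.Dual ℝ V) (b : Module.Dual ℝ V)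
    (h : ∀ x, (∀ i ∈ s, a i x ≤ 0) → b x ≤ 0) :
    ∃ c : ι → ℝ, (∀ i, 0 ≤ c i) ∧ b = ∑ i ∈ s, c i • a i := by
  classical
  induction s using Finset.induction_on generalizing a b with
  | empty =>
    refine ⟨fun _ => 0, fun _ => le_rfl, ?_⟩
    ext x
    have h1 := h x (by simp)
    have h2 := h (-x) (by simp)
    rw [map_neg] at h2
    simp only [Finset.sum_empty, LinearMap.zero_apply]
    linarith
  | insert k s hk ih =>
    by_cases hs : ∀ x, (∀ i ∈ s, a i x ≤ 0) → b x ≤ 0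
    · obtain ⟨c, hc, hb⟩ := ih a b hs
      refine ⟨fun i => if i = k then 0 else c i, fun i => ?_, ?_⟩
      · dsimp only
        split_ifs
        exacts [le_rfl, hc i]
      · rw [Finset.sum_insert hk]
        beta_reduce
        rw [if_pos rfl, zero_smul, zero_add, hb]
        refine Finset.sum_congr rfl fun i hi => ?_
        have hne : i ≠ k := fun e => hk (e ▸ hi)
        rw [if_neg hne]
    · push Not at hs
      obtain ⟨x₀, hx₀, hbx₀⟩ := hs
      have hkx : 0 < a k x₀ := by
        by_contra! hle
        refine absurd (h x₀ fun i hi => ?_) (not_le.2 hbx₀)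
        rcases Finset.mem_insert.1 hi with rfl | hi
        exacts [hle, hx₀ i hi]
      -- Compose every functional with the projection along `x₀` onto the kernel of `a k`.
      obtain ⟨c, hc, hb⟩ := ih (fun i => a i - (a i x₀ / a k x₀) • a k)
        (b - (b x₀ / a k x₀) • a k) (by
          intro y hy
          have hz := h (y - (a k y / a k x₀) • x₀) (by
            intro i hi
            rcases Finset.mem_insert.1 hi with rfl | hi
            · simp only [map_sub, map_smul, smul_eq_mul]
              field_simp
              simp
            · have := hy i hi
              simp only [LinearMap.sub_apply, LinearMap.smul_apply, smul_eq_mul] at this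
              simp only [map_sub, map_smul, smul_eq_mul]
              calc _ = _ := by ring
                _ ≤ 0 := this)
          simp only [map_sub, map_smul, smul_eq_mul] at hz
          simp only [LinearMap.sub_apply, LinearMap.smul_apply, smul_eq_mul]
          calc _ = _ := by ring
            _ ≤ 0 := hz)
      refine ⟨fun i => if i = k then b x₀ / a k x₀ - ∑ j ∈ s, c j * (a j x₀ / a k x₀) else c i,
        fun i => ?_, ?_⟩
      · dsimp only
        split_ifs
        · have h1 : 0 ≤ b x₀ / a k x₀ := by positivity
          have h2 : ∑ j ∈ s, c j * (a j x₀ / a k x₀) ≤ 0 :=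
            Finset.sum_nonpos fun j hj => mul_nonpos_of_nonneg_of_nonpos (hc j)
              (div_nonpos_of_nonpos_of_nonneg (hx₀ j hj) hkx.le)
          linarith
        · exact hc i
      · have hcongr : ∑ i ∈ s, (if i = k then b x₀ / a k x₀ -
            ∑ j ∈ s, c j * (a j x₀ / a k x₀) else c i) • a i = ∑ i ∈ s, c i • a i := by
          refine Finset.sum_congr rfl fun i hi => ?_
          have hne : i ≠ k := fun e => hk (e ▸ hi)
          rw [if_neg hne]
        rw [Finset.sum_insert hk]
        beta_reduce
        rw [if_pos rfl, hcongr]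
        ext y
        have hy := congrArg (fun φ => φ y) hb
        simp only [LinearMap.sub_apply, LinearMap.smul_apply, LinearMap.sum_apply, smul_eq_mul,
          mul_sub, Finset.sum_sub_distrib] at hy
        simp only [LinearMap.add_apply, LinearMap.smul_apply, LinearMap.sum_apply, smul_eq_mul,
          sub_mul, Finset.sum_mul, mul_assoc]
        linarith

theorem farkas_inner {n : ℕ} {ι : Type*} [Fintype ι] (a : ι → Rn n) (b : Rn n)
    (h : ∀ x, (∀ i, ⟪a i, x⟫ ≤ 0) → ⟪b, x⟫ ≤ 0) :
    ∃ c : ι → ℝ, (∀ i, 0 ≤ c i) ∧ b = ∑ i, c i • a i := by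
  obtain ⟨c, hc, hb⟩ := farkas Finset.univ (fun i => innerₗ (Rn n) (a i)) (innerₗ (Rn n) b)
    (by simpa using h)
  refine ⟨c, hc, ext_inner_right ℝ fun x => ?_⟩
  have := congrArg (fun φ => φ x) hb
  simpa [sum_inner, inner_smul_left] using this

/-- The first-order necessary condition `-∇f ∈ T°` at a local minimizer. -/
theorem neg_gradient_mem_polarCone {n : ℕ} {f : Rn n → ℝ} {F : Set (Rn n)} {x : Rn n}
    (hf : DifferentiableAt ℝ f x) (hmin : IsLocalMinOn f F x) :
    -gradient f x ∈ polarCone (tangentCone' F x) := by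
  rintro y ⟨xk, tk, hxF, ht, hx, -, hlim⟩
  have hy : y ∈ posTangentConeAt F x := by
    refine mem_tangentConeAt_of_seq atTop (fun k => (⟨(tk k)⁻¹, (inv_pos.2 (ht k)).le⟩ : NNReal))
      (fun k => xk k - x) ?_ ?_ ?_
    · simpa using hx.sub_const x
    · exact Eventually.of_forall fun k => by simpa using hxF k
    · exact hlim
  have := hmin.hasFDerivWithinAt_nonneg hf.hasGradientAt.hasFDerivAt.hasFDerivWithinAt hy
  rw [inner_neg_left]
  simpa using this

/-- If `-∇f` lies in the polar of the MPCC-linearized cone, then `xb` is `A_α`-stationary for every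
`α`: the linearized cone of the branch given by `α` is a polyhedral subset of the MPCC-linearized
cone, and Farkas' lemma on that subset provides the multipliers. -/
theorem aStat_of_polar {n l m p : ℕ} (f : Rn n → ℝ) (g : Fin l → Rn n → ℝ)
    (h : Fin m → Rn n → ℝ) (G H : Fin p → Rn n → ℝ) (xb : Rn n)
    (hfeas : xb ∈ MpccFeasible g h G H)
    (hpol : -gradient f xb ∈ polarCone (MpccLinCone g h G H xb))
    (α : Fin p → ℝ) (hα : IsBinaryVec α) : MpccAStat f g h G H xb α := by
  classical
  obtain ⟨-, -, hG0, hH0, hGH⟩ := hfeas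
  have hcomp : ∀ i, G i xb = 0 ∨ H i xb = 0 := by
    intro i
    have := (Finset.sum_eq_zero_iff_of_nonneg
      (fun i _ => mul_nonneg (hG0 i) (hH0 i))).1 hGH i (Finset.mem_univ i)
    exact mul_eq_zero.1 this
  -- Generators of the polar of the branch cone; an absent constraint contributes the vector `0`.
  let a : (Fin l ⊕ (Fin m ⊕ Fin m)) ⊕ ((Fin p ⊕ Fin p) ⊕ (Fin p ⊕ Fin p)) → Rn n :=
    Sum.elim
      (Sum.elim (fun i => if g i xb = 0 then gradient (g i) xb else 0)
        (Sum.elim (fun i => gradient (h i) xb) (fun i => -gradient (h i) xb)))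
      (Sum.elim
        (Sum.elim (fun i => if G i xb = 0 then -gradient (G i) xb else 0)
          (fun i => if G i xb = 0 ∧ ¬ (H i xb = 0 ∧ α i = 0) then gradient (G i) xb else 0))
        (Sum.elim (fun i => if H i xb = 0 then -gradient (H i) xb else 0)
          (fun i => if H i xb = 0 ∧ ¬ (G i xb = 0 ∧ α i = 1) then gradient (H i) xb else 0)))
  obtain ⟨c, hc, hsum⟩ := farkas_inner a (-gradient f xb) (by
    intro x hx
    have hg : ∀ i, g i xb = 0 → ⟪gradient (g i) xb, x⟫ ≤ 0 := fun i hi => by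
      simpa [a, hi] using hx (.inl (.inl i))
    have hh1 : ∀ i, ⟪gradient (h i) xb, x⟫ ≤ 0 := fun i => by
      simpa [a] using hx (.inl (.inr (.inl i)))
    have hh2 : ∀ i, 0 ≤ ⟪gradient (h i) xb, x⟫ := fun i => by
      simpa [a] using hx (.inl (.inr (.inr i)))
    have hG1 : ∀ i, G i xb = 0 → 0 ≤ ⟪gradient (G i) xb, x⟫ := fun i hi => by
      simpa [a, hi] using hx (.inr (.inl (.inl i)))
    have hG2 : ∀ i, G i xb = 0 → ¬ (H i xb = 0 ∧ α i = 0) → ⟪gradient (G i) xb, x⟫ ≤ 0 :=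
      fun i hi hi' => by
        have := hx (.inr (.inl (.inr i)))
        simp only [a, Sum.elim_inl, Sum.elim_inr] at this
        rwa [if_pos ⟨hi, hi'⟩] at this
    have hH1 : ∀ i, H i xb = 0 → 0 ≤ ⟪gradient (H i) xb, x⟫ := fun i hi => by
      simpa [a, hi] using hx (.inr (.inr (.inl i)))
    have hH2 : ∀ i, H i xb = 0 → ¬ (G i xb = 0 ∧ α i = 1) → ⟪gradient (H i) xb, x⟫ ≤ 0 :=
      fun i hi hi' => by
        have := hx (.inr (.inr (.inr i)))
        simp only [a, Sum.elim_inr] at this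
        rwa [if_pos ⟨hi, hi'⟩] at this
    refine hpol x ⟨hg, fun i => le_antisymm (hh1 i) (hh2 i), ?_, ?_, ?_⟩
    · exact fun i h1 h2 => le_antisymm (hG2 i h1 fun h => h2.ne' h.1) (hG1 i h1)
    · exact fun i h1 h2 => le_antisymm (hH2 i h2 fun h => h1.ne' h.1) (hH1 i h2)
    · intro i h1 h2
      refine ⟨hG1 i h1, hH1 i h2, ?_⟩
      rcases hα i with hi | hi
      · rw [le_antisymm (hH2 i h2 fun h => by simp [hi] at h) (hH1 i h2), mul_zero]
      · rw [le_antisymm (hG2 i h1 fun h => by simp [hi] at h) (hG1 i h1), zero_mul])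
  refine ⟨fun i => if g i xb = 0 then c (.inl (.inl i)) else 0,
    fun i => c (.inl (.inr (.inl i))) - c (.inl (.inr (.inr i))),
    fun i => (if G i xb = 0 then c (.inr (.inl (.inl i))) else 0) -
      (if G i xb = 0 ∧ ¬ (H i xb = 0 ∧ α i = 0) then c (.inr (.inl (.inr i))) else 0),
    fun i => (if H i xb = 0 then c (.inr (.inr (.inl i))) else 0) -
      (if H i xb = 0 ∧ ¬ (G i xb = 0 ∧ α i = 1) then c (.inr (.inr (.inr i))) else 0),
    ⟨?_, ?_, ?_, ?_, ?_⟩, ?_, ?_⟩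
  · simp only [Fintype.sum_sum_type, a, Sum.elim_inl, Sum.elim_inr, smul_neg, smul_ite,
      smul_zero] at hsum
    rw [neg_eq_iff_eq_neg] at hsum
    rw [hsum]
    simp only [sub_smul, ite_smul, zero_smul, Finset.sum_sub_distrib]
    have hneg : ∀ (P : Fin p → Prop) [DecidablePred P] (v : Fin p → Rn n),
        ∑ i, (if P i then -v i else 0) = -∑ i, (if P i then v i else 0) := by
      intro P _ v
      rw [← Finset.sum_neg_distrib]
      refine Finset.sum_congr rfl fun i _ => ?_
      split_ifs <;> simp
    rw [hneg, hneg, Finset.sum_neg_distrib]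
    abel
  · intro i hi
    simpa [hi] using hc _
  · intro i hi
    simp [hi]
  · intro i h1 h2
    simp [h1.ne']
  · intro i h1 h2
    simp [h2.ne']
  · intro i h1 h2 h3
    simpa [h1, h2, h3] using hc _
  · intro i h1 h2 h3
    simpa [h1, h2, h3] using hc _

/-! ### From A-stationarity to C-stationarity -/

/-- The multilinear interpolation weight at `t ∈ [0, 1]^p` of the vertex `β` of the cube. -/
def cubeWeight {p : ℕ} (t : Fin p → ℝ) (β : Fin p → Bool) : ℝ :=
  ∏ i, if β i then t i else 1 - t i

theorem cubeWeight_nonneg {p : ℕ} {t : Fin p → ℝ} (ht : t ∈ Set.Icc (0 : Fin p → ℝ) 1)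
    (β : Fin p → Bool) : 0 ≤ cubeWeight t β := by
  refine Finset.prod_nonneg fun i _ => ?_
  have h1 := ht.1 i
  have h2 := ht.2 i
  simp only [Pi.zero_apply, Pi.one_apply] at h1 h2
  split_ifs <;> linarith

theorem sum_cubeWeight {p : ℕ} (t : Fin p → ℝ) : ∑ β, cubeWeight t β = 1 := by
  have := Finset.prod_univ_sum (fun _ : Fin p => (Finset.univ : Finset Bool))
    (fun i (b : Bool) => if b then t i else 1 - t i)
  simp only [Fintype.piFinset_univ] at this
  unfold cubeWeight
  rw [← this]
  simp

theorem continuous_cubeWeight {p : ℕ} (β : Fin p → Bool) :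
    Continuous fun t : Fin p → ℝ => cubeWeight t β := by
  refine continuous_finsetProd _ fun i _ => ?_
  cases h : β i <;> simp <;> fun_prop

/-- On a face of the cube, vertices off this face have weight zero. -/
theorem cubeWeight_eq_zero {p : ℕ} {t : Fin p → ℝ} {β : Fin p → Bool} (i : Fin p)
    (h : (t i = 0 ∧ β i = true) ∨ (t i = 1 ∧ β i = false)) : cubeWeight t β = 0 := by
  refine Finset.prod_eq_zero (Finset.mem_univ i) ?_
  rcases h with ⟨h1, h2⟩ | ⟨h1, h2⟩ <;> simp [h1, h2]

/-- The multiplier tuples of weak stationarity form a convex set. -/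
theorem weakMult_convexComb {n l m p : ℕ} {κ : Type*} [Fintype κ] {f : Rn n → ℝ}
    {g : Fin l → Rn n → ℝ} {h : Fin m → Rn n → ℝ} {G H : Fin p → Rn n → ℝ} {xb : Rn n}
    (lam : κ → Fin l → ℝ) (eta : κ → Fin m → ℝ) (mu nu : κ → Fin p → ℝ)
    (hw : ∀ b, MpccWeakMult f g h G H xb (lam b) (eta b) (mu b) (nu b))
    (w : κ → ℝ) (hw0 : ∀ b, 0 ≤ w b) (hw1 : ∑ b, w b = 1) :
    MpccWeakMult f g h G H xb (fun i => ∑ b, w b * lam b i) (fun i => ∑ b, w b * eta b i)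
      (fun i => ∑ b, w b * mu b i) (fun i => ∑ b, w b * nu b i) := by
  have hswap : ∀ {k : ℕ} (c : κ → Fin k → ℝ) (v : Fin k → Rn n),
      ∑ i, (∑ b, w b * c b i) • v i = ∑ b, w b • ∑ i, c b i • v i := by
    intro k c v
    simp only [Finset.sum_smul, Finset.smul_sum, mul_smul]
    exact Finset.sum_comm
  refine ⟨?_, ?_, ?_, ?_, ?_⟩
  · have hf : gradient f xb = ∑ b, w b • gradient f xb := by
      rw [← Finset.sum_smul, hw1, one_smul]
    rw [hswap, hswap, hswap, hswap, hf, ← Finset.sum_add_distrib, ← Finset.sum_add_distrib,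
      ← Finset.sum_sub_distrib, ← Finset.sum_sub_distrib]
    refine Finset.sum_eq_zero fun b _ => ?_
    rw [← smul_add, ← smul_add, ← smul_sub, ← smul_sub, (hw b).1, smul_zero]
  · exact fun i hi => Finset.sum_nonneg fun b _ => mul_nonneg (hw0 b) ((hw b).2.1 i hi)
  · exact fun i hi => Finset.sum_eq_zero fun b _ => by rw [(hw b).2.2.1 i hi, mul_zero]
  · exact fun i h1 h2 => Finset.sum_eq_zero fun b _ => by rw [(hw b).2.2.2.1 i h1 h2, mul_zero]
  · exact fun i h1 h2 => Finset.sum_eq_zero fun b _ => by rw [(hw b).2.2.2.2 i h1 h2, mul_zero]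

/-- A continuous function of a multiplier pair `(μ, ν)` that vanishes only if the `C_d` condition
holds, is nonnegative where `μ ≥ 0` and nonpositive where `ν ≥ 0`. The second factor is the sum of
the negative parts of `μ` and `ν`. -/
def cGap (d μ ν : ℝ) : ℝ := ((1 - d) * μ - d * ν) * (max (-μ) 0 + max (-ν) 0)

theorem cGap_nonneg {d μ ν : ℝ} (hd : d ∈ Set.Icc (0 : ℝ) 1) (hμ : 0 ≤ μ) :
    0 ≤ cGap d μ ν := by
  unfold cGap
  rw [max_eq_right (by linarith : -μ ≤ 0), zero_add]
  rcases le_total 0 ν with h | h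
  · rw [max_eq_right (by linarith : -ν ≤ 0), mul_zero]
  · refine mul_nonneg ?_ (le_max_right _ _)
    nlinarith [mul_nonneg (sub_nonneg.2 hd.2) hμ, mul_nonneg hd.1 (neg_nonneg.2 h)]

theorem cGap_nonpos {d μ ν : ℝ} (hd : d ∈ Set.Icc (0 : ℝ) 1) (hν : 0 ≤ ν) :
    cGap d μ ν ≤ 0 := by
  unfold cGap
  rw [max_eq_right (by linarith : -ν ≤ 0), add_zero]
  rcases le_total 0 μ with h | h
  · rw [max_eq_right (by linarith : -μ ≤ 0), mul_zero]
  · refine mul_nonpos_of_nonpos_of_nonneg ?_ (le_max_right _ _)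
    nlinarith [mul_nonneg (sub_nonneg.2 hd.2) (neg_nonneg.2 h), mul_nonneg hd.1 hν]

theorem of_cGap_eq_zero {d μ ν : ℝ} (h : cGap d μ ν = 0) :
    (0 ≤ μ ∧ 0 ≤ ν) ∨ (1 - d) * μ = d * ν := by
  rcases mul_eq_zero.1 h with h | h
  · exact Or.inr (sub_eq_zero.1 h)
  · have h1 := le_max_right (-μ) 0
    have h2 := le_max_right (-ν) 0
    have h3 := le_max_left (-μ) 0
    have h4 := le_max_left (-ν) 0
    exact Or.inl ⟨by linarith, by linarith⟩

/-- Interpolating multipliers for all `A_α` over the cube of the `α`, the `μ i` are nonnegative on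
the face `t i = 0` and the `ν i` on the face `t i = 1`; Poincaré–Miranda applied to `cGap` finds a
convex combination satisfying the `C_d` conditions simultaneously. -/
theorem cStat_of_forall_aStat {n l m p : ℕ} (f : Rn n → ℝ) (g : Fin l → Rn n → ℝ)
    (h : Fin m → Rn n → ℝ) (G H : Fin p → Rn n → ℝ) (xb : Rn n)
    (hA : ∀ α : Fin p → ℝ, IsBinaryVec α → MpccAStat f g h G H xb α)
    (d : Fin p → ℝ) (hd : IsUnitIntervalVec d) : MpccCStat f g h G H xb d := by
  classical
  have hA' : ∀ β : Fin p → Bool, MpccAStat f g h G H xb (fun i => if β i then 1 else 0) :=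
    fun β => hA _ fun i => by by_cases hi : β i <;> simp [hi]
  choose lam eta mu nu hw hmu hnu using hA'
  obtain ⟨t, ht, hzero⟩ := poincare_miranda_s8
    (fun i t => if G i xb = 0 ∧ H i xb = 0 then
      cGap (d i) (∑ β, cubeWeight t β * mu β i) (∑ β, cubeWeight t β * nu β i) else 0)
    (by
      intro i
      by_cases hi : G i xb = 0 ∧ H i xb = 0
      · simp only [hi, and_self, if_true]
        have := continuous_cubeWeight (p := p)
        unfold cGap
        fun_prop
      · simp only [hi, if_false]
        exact continuous_const)
    (by
      intro i t ht hti
      split_ifs with hi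
      · refine cGap_nonneg (hd i) (Finset.sum_nonneg fun β _ => ?_)
        by_cases hb : β i = true
        · rw [cubeWeight_eq_zero i (Or.inl ⟨hti, hb⟩), zero_mul]
        · exact mul_nonneg (cubeWeight_nonneg ht β) (hmu β i hi.1 hi.2 (by simp [hb]))
      · exact le_rfl)
    (by
      intro i t ht hti
      split_ifs with hi
      · refine cGap_nonpos (hd i) (Finset.sum_nonneg fun β _ => ?_)
        by_cases hb : β i = true
        · exact mul_nonneg (cubeWeight_nonneg ht β) (hnu β i hi.1 hi.2 (by simp [hb]))
        · rw [cubeWeight_eq_zero i (Or.inr ⟨hti, by simpa using hb⟩), zero_mul]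
      · exact le_rfl)
  refine ⟨_, _, _, _, weakMult_convexComb lam eta mu nu hw (cubeWeight t) (cubeWeight_nonneg ht)
    (sum_cubeWeight t), fun i h1 h2 => of_cGap_eq_zero ?_⟩
  have := hzero i
  rwa [if_pos ⟨h1, h2⟩] at this

/-- A_α-stationarity for all α ∈ {0,1}^p implies C_d-stationarity
for all d ∈ [0,1]^p; in particular this holds for local minimizers under MPCC-GCQ. -/
theorem mpcc_AStat_all_implies_CStat_all {n l m p : ℕ} (f : Rn n → ℝ) (g : Fin l → Rn n → ℝ)
    (h : Fin m → Rn n → ℝ) (G H : Fin p → Rn n → ℝ) (xb : Rn n)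
    (hf : Differentiable ℝ f) (hg : ∀ i, Differentiable ℝ (g i))
    (hh : ∀ i, Differentiable ℝ (h i)) (hG : ∀ i, Differentiable ℝ (G i))
    (hH : ∀ i, Differentiable ℝ (H i))
    (hfeas : xb ∈ MpccFeasible g h G H) :
    ((∀ α : Fin p → ℝ, IsBinaryVec α → MpccAStat f g h G H xb α) →
      ∀ d : Fin p → ℝ, IsUnitIntervalVec d → MpccCStat f g h G H xb d) ∧
    (IsLocalMinOn f (MpccFeasible g h G H) xb →
      polarCone (tangentCone' (MpccFeasible g h G H) xb)
        = polarCone (MpccLinCone g h G H xb) →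
      ∀ d : Fin p → ℝ, IsUnitIntervalVec d → MpccCStat f g h G H xb d) := by
  refine ⟨cStat_of_forall_aStat f g h G H xb, fun hmin hGCQ => ?_⟩
  refine cStat_of_forall_aStat f g h G H xb (aStat_of_polar f g h G H xb hfeas ?_)
  rw [← hGCQ]
  exact neg_gradient_mem_polarCone (hf xb) hmin
end
end
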